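/- arXiv:2512.17572 — 2 statements merged into one kernel-verified Lean document; each statement's English description precedes it below -/
import Mathlib

section
/- Let n, r, d be positive integers and T > 0. Let Ā : [0,T] → ℝ^{n×n}, F : [0,T] → ℝ^{r×n}, and C̄ : [0,T] → ℝ^{n×d} be bounded measurable functions, and let σ be an n×n real symmetric positive semidefinite matrix. Then there exists a unique continuous function Φ : [0,T] → ℝ^{n×n} satisfying the integral equation Φ(t) = σ + ∫₀ᵗ [Ā(s)Φ(s) + Φ(s)Ā(s)ᵀ + C̄(s)C̄(s)ᵀ − Φ(s)F(s)ᵀF(s)Φ(s)] ds for all t ∈ [0,T]; moreover, Φ(t) is symmetric positive semidefinite for every t ∈ [0,T]. -/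
open Matrix MeasureTheory intervalIntegral

/-- `Φ` is a continuous solution on `[0,T]` of the matrix integral equation
`Φ(t) = σ + ∫₀ᵗ [Ā(s)Φ(s) + Φ(s)Ā(s)ᵀ + C̄(s)C̄(s)ᵀ − Φ(s)F(s)ᵀF(s)Φ(s)] ds`. -/
def RiccatiIntSol (n r d : ℕ) (T : ℝ)
    (Abar : ℝ → Matrix (Fin n) (Fin n) ℝ)
    (F : ℝ → Matrix (Fin r) (Fin n) ℝ)
    (Cbar : ℝ → Matrix (Fin n) (Fin d) ℝ)
    (σ : Matrix (Fin n) (Fin n) ℝ)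
    (Φ : ℝ → Matrix (Fin n) (Fin n) ℝ) : Prop :=
  (∀ i j, ContinuousOn (fun t => Φ t i j) (Set.Icc (0 : ℝ) T)) ∧
    ∀ t ∈ Set.Icc (0 : ℝ) T, ∀ i j,
      Φ t i j = σ i j + ∫ s in (0 : ℝ)..t,
        (Abar s * Φ s + Φ s * (Abar s)ᵀ + Cbar s * (Cbar s)ᵀ
          - Φ s * (F s)ᵀ * F s * Φ s) i j

/-- Bounded and a.e. strongly measurable on `[0,T]`. -/
def RicB (T : ℝ) (g : ℝ → ℝ) : Prop :=
  AEStronglyMeasurable g (volume.restrict (Set.Icc (0 : ℝ) T)) ∧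
    ∃ K, ∀ s ∈ Set.Icc (0 : ℝ) T, |g s| ≤ K

/-- `f` is a primitive of the bounded measurable function `g` on `[0,T]`. -/
def RicP (T : ℝ) (f g : ℝ → ℝ) : Prop :=
  RicB T g ∧ ∀ t ∈ Set.Icc (0 : ℝ) T, f t = f 0 + ∫ s in (0 : ℝ)..t, g s

namespace RicB
variable {T : ℝ} {f g : ℝ → ℝ}

theorem const (c : ℝ) : RicB T (fun _ => c) :=
  ⟨aestronglyMeasurable_const, |c|, fun _ _ => le_rfl⟩

theorem add (hf : RicB T f) (hg : RicB T g) : RicB T (fun s => f s + g s) := by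
  obtain ⟨hf, K, hK⟩ := hf
  obtain ⟨hg, L, hL⟩ := hg
  exact ⟨hf.add hg, K + L, fun s hs => (abs_add_le _ _).trans (add_le_add (hK s hs) (hL s hs))⟩

theorem mul (hf : RicB T f) (hg : RicB T g) : RicB T (fun s => f s * g s) := by
  obtain ⟨hf, K, hK⟩ := hf
  obtain ⟨hg, L, hL⟩ := hg
  refine ⟨hf.mul hg, K * L, fun s hs => ?_⟩
  rw [abs_mul]
  exact mul_le_mul (hK s hs) (hL s hs) (abs_nonneg _) ((abs_nonneg _).trans (hK s hs))

theorem sum {ι : Type*} (S : Finset ι) {f : ι → ℝ → ℝ} (hf : ∀ i, RicB T (f i)) :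
    RicB T (fun s => ∑ i ∈ S, f i s) := by
  classical
  induction S using Finset.induction_on with
  | empty => simpa using const 0
  | insert a S ha ih => simpa [Finset.sum_insert ha] using (hf a).add ih

theorem of_continuousOn (hf : ContinuousOn f (Set.Icc (0 : ℝ) T)) : RicB T f := by
  refine ⟨hf.aestronglyMeasurable measurableSet_Icc, ?_⟩
  obtain ⟨K, hK⟩ := isCompact_Icc.exists_bound_of_continuousOn hf
  exact ⟨K, hK⟩

theorem integrableOn (hf : RicB T f) : IntegrableOn f (Set.Icc (0 : ℝ) T) := by
  obtain ⟨hf, K, hK⟩ := hf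
  refine Integrable.of_bound hf K ?_
  exact (ae_restrict_iff' measurableSet_Icc).2 (ae_of_all _ hK)

theorem intervalIntegrable (hf : RicB T f) {t : ℝ} (ht : t ∈ Set.Icc (0 : ℝ) T) :
    IntervalIntegrable f volume 0 t := by
  rw [intervalIntegrable_iff_integrableOn_Icc_of_le ht.1]
  exact hf.integrableOn.mono_set (Set.Icc_subset_Icc_right ht.2)

end RicB

namespace RicP
variable {T : ℝ} {f g h k : ℝ → ℝ}

theorem continuousOn (hf : RicP T f g) : ContinuousOn f (Set.Icc (0 : ℝ) T) := by
  have h1 : ContinuousOn (fun t => ∫ s in (0 : ℝ)..t, g s) (Set.Icc (0 : ℝ) T) :=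
    continuousOn_primitive_Icc hf.1.integrableOn |>.congr (fun t ht => by
      beta_reduce
      rw [intervalIntegral.integral_of_le ht.1, integral_Icc_eq_integral_Ioc])
  exact (continuousOn_const.add h1).congr hf.2

theorem ricB (hf : RicP T f g) : RicB T f := RicB.of_continuousOn hf.continuousOn

theorem const (c : ℝ) : RicP T (fun _ => c) (fun _ => 0) := ⟨RicB.const 0, by simp⟩

theorem add (hf : RicP T f g) (hh : RicP T h k) :
    RicP T (fun s => f s + h s) (fun s => g s + k s) := by
  refine ⟨hf.1.add hh.1, fun t ht => ?_⟩
  beta_reduce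
  rw [intervalIntegral.integral_add (hf.1.intervalIntegrable ht) (hh.1.intervalIntegrable ht),
    hf.2 t ht, hh.2 t ht]
  ring

theorem mul (hf : RicP T f g) (hh : RicP T h k) :
    RicP T (fun s => f s * h s) (fun s => g s * h s + f s * k s) := by
  refine ⟨(hf.1.mul hh.ricB).add (hf.ricB.mul hh.1), fun t ht => ?_⟩
  have key : ∀ {f g : ℝ → ℝ}, RicP T f g →
      AbsolutelyContinuousOnInterval (fun x => f 0 + ∫ s in (0 : ℝ)..x, g s) 0 t := by
    intro f g hf
    have h1 := (hf.1.intervalIntegrable ht).absolutelyContinuousOnInterval_intervalIntegral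
      (c := 0) (by simp)
    have h2 : AbsolutelyContinuousOnInterval (fun _ : ℝ => f 0) 0 t :=
      ((LipschitzWith.const (f 0)).lipschitzOnWith (s := Set.uIcc 0 t)).absolutelyContinuousOnInterval
    exact h2.add h1
  have hd : ∀ {f g : ℝ → ℝ}, RicP T f g →
      ∀ᵐ x, x ∈ Set.uIcc 0 t → deriv (fun x => f 0 + ∫ s in (0 : ℝ)..x, g s) x = g x := by
    intro f g hf
    filter_upwards [(hf.1.intervalIntegrable ht).ae_hasDerivAt_integral] with x hx hxt
    exact ((hx hxt 0 (by simp)).const_add (f 0)).deriv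
  have h3 := (key hf).integral_deriv_mul_eq_sub (key hh)
  simp only [intervalIntegral.integral_same, add_zero, ← hf.2 t ht, ← hh.2 t ht] at h3
  have h4 : (∫ x in (0 : ℝ)..t, g x * h x + f x * k x) = f t * h t - f 0 * h 0 := by
    rw [← h3]
    apply intervalIntegral.integral_congr_ae
    filter_upwards [hd hf, hd hh] with x h5 h6 h7
    have h8 := Set.uIoc_subset_uIcc h7
    have h9 : x ∈ Set.Icc 0 T := by
      rw [Set.uIcc_of_le ht.1] at h8
      exact ⟨h8.1, h8.2.trans ht.2⟩
    rw [h5 h8, h6 h8, ← hf.2 x h9, ← hh.2 x h9]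
  rw [h4]; ring

theorem sum {ι : Type*} (S : Finset ι) {f g : ι → ℝ → ℝ} (hf : ∀ i, RicP T (f i) (g i)) :
    RicP T (fun s => ∑ i ∈ S, f i s) (fun s => ∑ i ∈ S, g i s) := by
  classical
  induction S using Finset.induction_on with
  | empty => simpa using const 0
  | insert a S ha ih => simpa [Finset.sum_insert ha] using (hf a).add ih

theorem mul_const (hf : RicP T f g) (c : ℝ) : RicP T (fun s => f s * c) (fun s => g s * c) := by
  simpa using hf.mul (const c)

theorem const_mul (hf : RicP T f g) (c : ℝ) : RicP T (fun s => c * f s) (fun s => c * g s) := by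
  simpa using (const c).mul hf

theorem eq_of_zero (hf : RicP T f g) (hg : ∀ s ∈ Set.Icc (0 : ℝ) T, g s = 0) {t : ℝ}
    (ht : t ∈ Set.Icc (0 : ℝ) T) : f t = f 0 := by
  rw [hf.2 t ht, intervalIntegral.integral_congr (g := fun _ => 0)]
  · simp
  · intro s hs
    rw [Set.uIcc_of_le ht.1] at hs
    exact hg s ⟨hs.1, hs.2.trans ht.2⟩

theorem congr (hf : RicP T f g) (hk : ∀ s ∈ Set.Icc (0 : ℝ) T, g s = k s)
    (hkB : RicB T k) : RicP T f k := by
  refine ⟨hkB, fun t ht => ?_⟩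
  rw [hf.2 t ht]
  congr 1
  apply intervalIntegral.integral_congr
  intro s hs
  rw [Set.uIcc_of_le ht.1] at hs
  exact hk s ⟨hs.1, hs.2.trans ht.2⟩

end RicP

/-- Entrywise bounded measurable matrix function. -/
def RicMB {ι κ : Type*} (T : ℝ) (M : ℝ → Matrix ι κ ℝ) : Prop := ∀ i j, RicB T (fun s => M s i j)

/-- Entrywise primitive. -/
def RicMP {ι κ : Type*} (T : ℝ) (M N : ℝ → Matrix ι κ ℝ) : Prop :=
  ∀ i j, RicP T (fun s => M s i j) (fun s => N s i j)

section RicMat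
variable {ι κ l : Type*} {T : ℝ}

theorem RicMB.transpose {M : ℝ → Matrix ι κ ℝ} (hM : RicMB T M) : RicMB T (fun s => (M s)ᵀ) :=
  fun i j => hM j i

theorem RicMB.add {M N : ℝ → Matrix ι κ ℝ} (hM : RicMB T M) (hN : RicMB T N) :
    RicMB T (fun s => M s + N s) :=
  fun i j => (hM i j).add (hN i j)

theorem RicMB.neg {M : ℝ → Matrix ι κ ℝ} (hM : RicMB T M) :
    RicMB T (fun s => - M s) :=
  fun i j => by simpa using (RicB.const (-1)).mul (hM i j)

theorem RicMB.sub {M N : ℝ → Matrix ι κ ℝ} (hM : RicMB T M) (hN : RicMB T N) :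
    RicMB T (fun s => M s - N s) := by
  simpa [sub_eq_add_neg] using hM.add hN.neg

theorem RicMB.mul [Fintype κ] {M : ℝ → Matrix ι κ ℝ} {N : ℝ → Matrix κ l ℝ}
    (hM : RicMB T M) (hN : RicMB T N) : RicMB T (fun s => M s * N s) := by
  intro i j
  simp only [Matrix.mul_apply]
  exact RicB.sum _ fun x => (hM i x).mul (hN x j)

theorem RicMP.ricMB {M N : ℝ → Matrix ι κ ℝ} (h : RicMP T M N) : RicMB T M :=
  fun i j => (h i j).ricB

theorem RicMP.transpose {M N : ℝ → Matrix ι κ ℝ} (h : RicMP T M N) :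
    RicMP T (fun s => (M s)ᵀ) (fun s => (N s)ᵀ) :=
  fun i j => h j i

theorem RicMP.sub {M N M' N' : ℝ → Matrix ι κ ℝ} (h : RicMP T M N) (h' : RicMP T M' N') :
    RicMP T (fun s => M s - M' s) (fun s => N s - N' s) := by
  intro i j
  simpa [sub_eq_add_neg] using (h i j).add ((h' i j).const_mul (-1))

theorem RicMP.mul [Fintype κ] {M N : ℝ → Matrix ι κ ℝ} {M' N' : ℝ → Matrix κ l ℝ}
    (h : RicMP T M N) (h' : RicMP T M' N') :
    RicMP T (fun s => M s * M' s) (fun s => N s * M' s + M s * N' s) := by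
  intro i j
  simp only [Matrix.mul_apply, Matrix.add_apply, ← Finset.sum_add_distrib]
  exact RicP.sum _ fun x => (h i x).mul (h' x j)

theorem RicMP.mulVec [Fintype κ] {M N : ℝ → Matrix ι κ ℝ} (h : RicMP T M N) (x : κ → ℝ) (i : ι) :
    RicP T (fun s => (M s *ᵥ x) i) (fun s => (N s *ᵥ x) i) := by
  simp only [Matrix.mulVec, dotProduct]
  exact RicP.sum _ fun j => (h i j).mul_const (x j)

theorem RicMP.quad [Fintype κ] {M N : ℝ → Matrix κ κ ℝ} (h : RicMP T M N) (x : κ → ℝ) :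
    RicP T (fun s => x ⬝ᵥ (M s *ᵥ x)) (fun s => x ⬝ᵥ (N s *ᵥ x)) := by
  simp only [dotProduct]
  exact RicP.sum _ fun j => (h.mulVec x j).const_mul (x j)

theorem RicMP.congr {M N N' : ℝ → Matrix ι κ ℝ} (h : RicMP T M N)
    (hN : ∀ s ∈ Set.Icc (0 : ℝ) T, N s = N' s) (hB : RicMB T N') : RicMP T M N' :=
  fun i j => (h i j).congr (fun s hs => by rw [hN s hs]) (hB i j)

theorem RicMP.eq_of_zero {M N : ℝ → Matrix ι κ ℝ} (h : RicMP T M N)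
    (hN : ∀ s ∈ Set.Icc (0 : ℝ) T, N s = 0) {t : ℝ} (ht : t ∈ Set.Icc (0 : ℝ) T) :
    M t = M 0 := by
  ext i j
  exact (h i j).eq_of_zero (fun s hs => by simp [hN s hs]) ht

/-- Picard terms. -/
noncomputable def ricPic [Fintype ι] (L : ℝ → Matrix ι ι ℝ) (X0 : Matrix ι κ ℝ) :
    ℕ → ℝ → Matrix ι κ ℝ
  | 0 => fun _ => X0
  | k + 1 => fun t i j => ∫ s in (0 : ℝ)..t, (L s * ricPic L X0 k s) i j

theorem ricPic_MB [Fintype ι] {L : ℝ → Matrix ι ι ℝ} (hL : RicMB T L) (X0 : Matrix ι κ ℝ) (k : ℕ) :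
    RicMB T (ricPic L X0 k) ∧ ∀ i j, ContinuousOn (fun s => ricPic L X0 k s i j) (Set.Icc 0 T) := by
  induction k with
  | zero => exact ⟨fun i j => RicB.const _, fun i j => continuousOn_const⟩
  | succ k ih =>
    have : RicMP T (ricPic L X0 (k+1)) (fun s => L s * ricPic L X0 k s) := fun i j =>
      ⟨hL.mul ih.1 i j, fun t ht => by simp [ricPic]⟩
    exact ⟨this.ricMB, fun i j => (this i j).continuousOn⟩

theorem exists_abs_le [Fintype ι] [Fintype κ] {M : ℝ → Matrix ι κ ℝ} (hM : RicMB T M) :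
    ∃ K, 0 ≤ K ∧ ∀ s ∈ Set.Icc (0 : ℝ) T, ∀ i j, |M s i j| ≤ K := by
  choose h K hK using hM
  refine ⟨∑ i, ∑ j, |K i j|, by positivity, fun s hs i j => ?_⟩
  calc |M s i j| ≤ |K i j| := (hK i j s hs).trans (le_abs_self _)
    _ ≤ ∑ j, |K i j| := Finset.single_le_sum (f := fun j => |K i j|)
        (fun _ _ => abs_nonneg _) (Finset.mem_univ j)
    _ ≤ _ := Finset.single_le_sum (f := fun i => ∑ j, |K i j|)
        (fun _ _ => Finset.sum_nonneg fun _ _ => abs_nonneg _) (Finset.mem_univ i)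

theorem ricMul_bound [Fintype ι] {A : Matrix ι ι ℝ} {X : Matrix ι κ ℝ} {a b : ℝ} (ha : 0 ≤ a)
    (hA : ∀ i j, |A i j| ≤ a) (hX : ∀ i j, |X i j| ≤ b) (i : ι) (j : κ) :
    |(A * X) i j| ≤ Fintype.card ι * a * b := by
  rw [Matrix.mul_apply]
  calc |∑ x, A i x * X x j| ≤ ∑ x, |A i x * X x j| := Finset.abs_sum_le_sum_abs _ _
    _ ≤ ∑ _x : ι, a * b := Finset.sum_le_sum fun x _ => by
        rw [abs_mul]; exact mul_le_mul (hA _ _) (hX _ _) (abs_nonneg _) ha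
    _ = _ := by simp [mul_assoc]

theorem ricPic_bound [Fintype ι] {L : ℝ → Matrix ι ι ℝ} (X0 : Matrix ι κ ℝ) {K M : ℝ} (hK0 : 0 ≤ K)
    (hK : ∀ s ∈ Set.Icc (0 : ℝ) T, ∀ i j, |L s i j| ≤ K) (hM : ∀ i j, |X0 i j| ≤ M) (k : ℕ) :
    ∀ t ∈ Set.Icc (0 : ℝ) T, ∀ i j, |ricPic L X0 k t i j| ≤
      M * ((Fintype.card ι * K * t) ^ k / (k.factorial : ℝ)) := by
  induction k with
  | zero => intro t ht i j; simpa [ricPic] using hM i j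
  | succ k ih =>
    intro t ht i j
    have h1 : ‖∫ s in (0 : ℝ)..t, (L s * ricPic L X0 k s) i j‖ ≤
        ∫ s in (0 : ℝ)..t, Fintype.card ι * K *
          (M * ((Fintype.card ι * K * s) ^ k / (k.factorial : ℝ))) := by
      apply intervalIntegral.norm_integral_le_of_norm_le ht.1
      · refine ae_of_all _ fun s hs => ?_
        have hs' : s ∈ Set.Icc (0 : ℝ) T := ⟨hs.1.le, hs.2.trans ht.2⟩
        exact ricMul_bound hK0 (hK s hs') (ih s hs') i j
      · apply Continuous.intervalIntegrable
        fun_prop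
    refine h1.trans (le_of_eq ?_)
    have h2 : (fun s : ℝ => Fintype.card ι * K *
          (M * ((Fintype.card ι * K * s) ^ k / (k.factorial : ℝ)))) =
        fun s => ((Fintype.card ι * K) ^ (k+1) * M / (k.factorial : ℝ)) * s ^ k := by
      ext s; rw [mul_pow]; ring
    rw [h2, intervalIntegral.integral_const_mul, integral_pow, Nat.factorial_succ]
    push_cast
    rw [mul_pow]
    have : (k.factorial : ℝ) ≠ 0 := by positivity
    field_simp
    ring

theorem ricLin_exists [Fintype ι] [Fintype κ] (hT : 0 < T) {L : ℝ → Matrix ι ι ℝ}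
    (hL : RicMB T L) (X0 : Matrix ι κ ℝ) :
    ∃ X : ℝ → Matrix ι κ ℝ, X 0 = X0 ∧ RicMP T X (fun s => L s * X s) := by
  obtain ⟨K, hK0, hK⟩ := exists_abs_le hL
  obtain ⟨M, hM0, hM⟩ := exists_abs_le (T := T) (M := fun _ => X0) (fun i j => RicB.const _)
  have hM := hM 0 ⟨le_rfl, hT.le⟩
  have hb := ricPic_bound X0 hK0 hK hM
  set c : ℝ := Fintype.card ι * K with hc
  have hc0 : 0 ≤ c := by positivity
  have hb' : ∀ k, ∀ t ∈ Set.Icc (0 : ℝ) T, ∀ i j, |ricPic L X0 k t i j| ≤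
      M * ((c * T) ^ k / (k.factorial : ℝ)) := by
    intro k t ht i j
    refine (hb k t ht i j).trans ?_
    have := ht.1
    have := ht.2
    gcongr
  have hsum : Summable fun k : ℕ => M * ((c * T) ^ k / (k.factorial : ℝ)) :=
    (Real.summable_pow_div_factorial (c * T)).mul_left M
  let X : ℝ → Matrix ι κ ℝ := fun t i j => ∑' k, ricPic L X0 k t i j
  have hX : ∀ t ∈ Set.Icc (0 : ℝ) T, ∀ i j, HasSum (fun k => ricPic L X0 k t i j) (X t i j) :=
    fun t ht i j => (Summable.of_norm_bounded hsum (fun k => hb' k t ht i j)).hasSum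
  have hXc : ∀ i j, ContinuousOn (fun t => X t i j) (Set.Icc (0 : ℝ) T) := fun i j =>
    continuousOn_tsum (fun k => (ricPic_MB hL X0 k).2 i j) hsum (fun k t ht => hb' k t ht i j)
  have hXB : RicMB T X := fun i j => RicB.of_continuousOn (hXc i j)
  have hLX : ∀ t ∈ Set.Icc (0 : ℝ) T, ∀ i j,
      HasSum (fun k => (L t * ricPic L X0 k t) i j) ((L t * X t) i j) := by
    intro t ht i j
    simp only [Matrix.mul_apply]
    exact hasSum_sum fun x _ => (hX t ht x j).mul_left _
  have hint : ∀ t ∈ Set.Icc (0 : ℝ) T, ∀ i j,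
      X t i j = X0 i j + ∫ s in (0 : ℝ)..t, (L s * X s) i j := by
    intro t ht i j
    have hmem : ∀ s, s ∈ Set.uIoc 0 t → s ∈ Set.Icc (0 : ℝ) T := fun s hs => by
      rw [Set.uIoc_of_le ht.1] at hs
      exact ⟨hs.1.le, hs.2.trans ht.2⟩
    have h1 : HasSum (fun k => ∫ s in (0 : ℝ)..t, (L s * ricPic L X0 k s) i j)
        (∫ s in (0 : ℝ)..t, (L s * X s) i j) := by
      apply intervalIntegral.hasSum_integral_of_dominated_convergence
        (fun k _ => c * (M * ((c * T) ^ k / (k.factorial : ℝ))))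
      · intro k
        exact ((hL.mul (ricPic_MB hL X0 k).1) i j).1.mono_measure
          (Measure.restrict_mono hmem le_rfl)
      · intro k
        exact ae_of_all _ fun s hs =>
          ricMul_bound hK0 (hK s (hmem s hs)) (hb' k s (hmem s hs)) i j
      · exact ae_of_all _ fun s hs => hsum.mul_left c
      · exact intervalIntegrable_const
      · exact ae_of_all _ fun s hs => hLX s (hmem s hs) i j
    have h2 := (hX t ht i j)
    rw [← hasSum_nat_add_iff' 1] at h2
    have h3 := h2.unique h1
    simp only [Finset.range_one, Finset.sum_singleton, ricPic] at h3
    linarith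
  have hX0 : X 0 = X0 := by
    ext i j
    simpa using hint 0 ⟨le_rfl, hT.le⟩ i j
  exact ⟨X, hX0, fun i j => ⟨hL.mul hXB i j, fun t ht => by
    beta_reduce; rw [hX0]; exact hint t ht i j⟩⟩

end RicMat

theorem ricFund {ι : Type*} [Fintype ι] [DecidableEq ι] {T : ℝ} (hT : 0 < T)
    {L : ℝ → Matrix ι ι ℝ} (hL : RicMB T L) :
    ∃ Y Z : ℝ → Matrix ι ι ℝ, Y 0 = 1 ∧ Z 0 = 1 ∧ RicMP T Y (fun s => Y s * L s) ∧
      RicMP T Z (fun s => -L s * Z s) ∧ ∀ t ∈ Set.Icc (0 : ℝ) T, Y t * Z t = 1 := by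
  obtain ⟨Y, hY0, hY⟩ := ricLin_exists hT hL.transpose (1 : Matrix ι ι ℝ)
  obtain ⟨Z, hZ0, hZ⟩ := ricLin_exists hT hL.neg (1 : Matrix ι ι ℝ)
  have hY' : RicMP T (fun s => (Y s)ᵀ) (fun s => (Y s)ᵀ * L s) := by
    simpa using hY.transpose
  refine ⟨fun s => (Y s)ᵀ, Z, by simp [hY0], hZ0, hY', hZ, fun t ht => ?_⟩
  have := (hY'.mul hZ).eq_of_zero (fun s _ => by simp [Matrix.mul_assoc]) ht
  simpa [hY0, hZ0] using this

theorem ricInv_continuousOn {ι : Type*} [Fintype ι] [DecidableEq ι] {S : Set ℝ}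
    {U : ℝ → Matrix ι ι ℝ} (hU : ∀ i j, ContinuousOn (fun s => U s i j) S)
    (hdet : ∀ s ∈ S, (U s).det ≠ 0) (i j : ι) :
    ContinuousOn (fun s => (U s)⁻¹ i j) S := by
  have hUc : ContinuousOn U S := continuousOn_pi.2 fun i => continuousOn_pi.2 fun j => hU i j
  have h1 : ContinuousOn (fun s => (U s).det) S :=
    (Continuous.matrix_det continuous_id).comp_continuousOn hUc
  have h2 : ContinuousOn (fun s => (U s).adjugate i j) S :=
    ((Continuous.matrix_adjugate continuous_id).matrix_elem i j).comp_continuousOn hUc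
  simp only [Matrix.inv_def, Ring.inverse_eq_inv', Matrix.smul_apply, smul_eq_mul]
  exact (h1.inv₀ hdet).mul h2

section RicMain
variable {n r d : ℕ} {T : ℝ} {A : ℝ → Matrix (Fin n) (Fin n) ℝ} {F : ℝ → Matrix (Fin r) (Fin n) ℝ}
  {C : ℝ → Matrix (Fin n) (Fin d) ℝ} {σ : Matrix (Fin n) (Fin n) ℝ}

theorem RiccatiIntSol.ricMP (hT : 0 < T) (hA : RicMB T A) (hF : RicMB T F) (hC : RicMB T C)
    {Φ : ℝ → Matrix (Fin n) (Fin n) ℝ} (h : RiccatiIntSol n r d T A F C σ Φ) :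
    Φ 0 = σ ∧ RicMP T Φ (fun s => A s * Φ s + Φ s * (A s)ᵀ + C s * (C s)ᵀ
          - Φ s * (F s)ᵀ * F s * Φ s) := by
  have h0 : Φ 0 = σ := by
    ext i j
    simpa using h.2 0 ⟨le_rfl, hT.le⟩ i j
  have hB : RicMB T Φ := fun i j => RicB.of_continuousOn (h.1 i j)
  have hB2 : RicMB T (fun s => A s * Φ s + Φ s * (A s)ᵀ + C s * (C s)ᵀ
          - Φ s * (F s)ᵀ * F s * Φ s) :=
    (((hA.mul hB).add (hB.mul hA.transpose)).add (hC.mul hC.transpose)).sub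
      (((hB.mul hF.transpose).mul hF).mul hB)
  refine ⟨h0, fun i j => ⟨hB2 i j, fun t ht => ?_⟩⟩
  beta_reduce
  rw [h0]
  exact h.2 t ht i j

theorem ric_unique (hT : 0 < T) (hA : RicMB T A) (hF : RicMB T F) (hC : RicMB T C)
    {Φ Ψ : ℝ → Matrix (Fin n) (Fin n) ℝ} (h : RiccatiIntSol n r d T A F C σ Φ)
    (h' : RiccatiIntSol n r d T A F C σ Ψ) : ∀ t ∈ Set.Icc (0 : ℝ) T, Ψ t = Φ t := by
  obtain ⟨hΦ0, hΦ⟩ := h.ricMP hT hA hF hC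
  obtain ⟨hΨ0, hΨ⟩ := h'.ricMP hT hA hF hC
  have hFF := hF.transpose.mul hF
  obtain ⟨Y, Y', hY0, -, -, hY, hYY⟩ := ricFund hT
    (L := fun s => (A s)ᵀ - (F s)ᵀ * F s * Φ s) (hA.transpose.sub (hFF.mul hΦ.ricMB))
  obtain ⟨Z, Z', hZ0, -, hZ, -, hZZ⟩ := ricFund hT
    (L := fun s => -(A s - Ψ s * ((F s)ᵀ * F s))) (hA.sub (hΨ.ricMB.mul hFF)).neg
  intro t ht
  have key := ((hZ.mul (hΨ.sub hΦ)).mul hY).eq_of_zero (fun s _ => by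
    simp only [Matrix.mul_sub, Matrix.sub_mul, Matrix.mul_add, Matrix.add_mul, Matrix.neg_mul,
      Matrix.mul_neg, Matrix.mul_assoc, neg_sub]
    abel) ht
  rw [hΦ0, hΨ0, sub_self, Matrix.mul_zero, Matrix.zero_mul] at key
  have hZ1 : Z' t * Z t = 1 := mul_eq_one_comm.1 (hZZ t ht)
  have hY1 : Y' t * Y t = 1 := mul_eq_one_comm.1 (hYY t ht)
  have : Ψ t - Φ t = (Z' t * Z t) * (Ψ t - Φ t) * (Y' t * Y t) := by simp [hZ1, hY1]
  have e : Ψ t - Φ t = 0 := by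
    rw [this]
    calc _ = Z' t * (Z t * (Ψ t - Φ t) * Y' t) * Y t := by simp only [Matrix.mul_assoc]
      _ = 0 := by rw [key]; simp
  exact sub_eq_zero.1 e

theorem ric_hamiltonian (hT : 0 < T) (hA : RicMB T A) (hF : RicMB T F) (hC : RicMB T C)
    (σ : Matrix (Fin n) (Fin n) ℝ) : ∃ U V : ℝ → Matrix (Fin n) (Fin n) ℝ, U 0 = 1 ∧ V 0 = σ ∧
      RicMP T U (fun s => -(A s)ᵀ * U s + (F s)ᵀ * F s * V s) ∧
      RicMP T V (fun s => C s * (C s)ᵀ * U s + A s * V s) := by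
  have hL : RicMB T (fun s => Matrix.fromBlocks (-(A s)ᵀ) ((F s)ᵀ * F s) (C s * (C s)ᵀ) (A s)) := by
    rintro (i | i) (j | j)
    · exact hA.transpose.neg i j
    · exact hF.transpose.mul hF i j
    · exact hC.mul hC.transpose i j
    · exact hA i j
  obtain ⟨X, hX0, hX⟩ := ricLin_exists hT hL (Matrix.fromRows (1 : Matrix (Fin n) (Fin n) ℝ) σ)
  refine ⟨fun s i j => X s (Sum.inl i) j, fun s i j => X s (Sum.inr i) j, ?_, ?_, ?_, ?_⟩
  · ext i j; simp [hX0]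
  · ext i j; simp [hX0]
  · intro i j
    have := hX (Sum.inl i) j
    simp only [Matrix.mul_apply (N := X _), Fintype.sum_sum_type, Matrix.fromBlocks_apply₁₁,
      Matrix.fromBlocks_apply₁₂] at this
    exact this
  · intro i j
    have := hX (Sum.inr i) j
    simp only [Matrix.mul_apply (N := X _), Fintype.sum_sum_type, Matrix.fromBlocks_apply₂₁,
      Matrix.fromBlocks_apply₂₂] at this
    exact this

theorem ric_exists (hT : 0 < T) (hA : RicMB T A) (hF : RicMB T F) (hC : RicMB T C)
    (hσ : σ.PosSemidef) : ∃ Φ : ℝ → Matrix (Fin n) (Fin n) ℝ,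
      RiccatiIntSol n r d T A F C σ Φ ∧ ∀ t ∈ Set.Icc (0 : ℝ) T, (Φ t).PosSemidef := by
  obtain ⟨U, V, hU0, hV0, hU, hV⟩ := ric_hamiltonian hT hA hF hC σ
  have hσT : σᵀ = σ := by simpa using hσ.1.eq
  -- the symmetric form
  have hS : RicMP T (fun s => (U s)ᵀ * V s)
      (fun s => (F s * V s)ᵀ * (F s * V s) + ((C s)ᵀ * U s)ᵀ * ((C s)ᵀ * U s)) := by
    convert hU.transpose.mul hV using 2 with s
    simp only [Matrix.transpose_add, Matrix.transpose_mul, Matrix.transpose_neg,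
      Matrix.transpose_transpose, Matrix.mul_assoc, Matrix.add_mul,
      Matrix.mul_add, Matrix.neg_mul, Matrix.mul_neg]
    abel
  have hsymm : ∀ t ∈ Set.Icc (0 : ℝ) T, ((U t)ᵀ * V t)ᵀ = (U t)ᵀ * V t := by
    intro t ht
    have := (hS.transpose.sub hS).eq_of_zero (fun s _ => by
      simp [Matrix.transpose_add, Matrix.transpose_mul]) ht
    simp only [hU0, hV0, Matrix.transpose_one, Matrix.one_mul, hσT, sub_self] at this
    exact sub_eq_zero.1 this
  have hqd : ∀ (x : Fin n → ℝ) (s : ℝ), x ⬝ᵥ (((F s * V s)ᵀ * (F s * V s) +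
      ((C s)ᵀ * U s)ᵀ * ((C s)ᵀ * U s)) *ᵥ x) =
      ((F s * V s) *ᵥ x) ⬝ᵥ ((F s * V s) *ᵥ x) +
      (((C s)ᵀ * U s) *ᵥ x) ⬝ᵥ (((C s)ᵀ * U s) *ᵥ x) := by
    intro x s
    have aux : ∀ {m : ℕ} (G : Matrix (Fin m) (Fin n) ℝ),
        x ⬝ᵥ ((Gᵀ * G) *ᵥ x) = (G *ᵥ x) ⬝ᵥ (G *ᵥ x) := fun G => by
      rw [← Matrix.mulVec_mulVec, Matrix.dotProduct_mulVec, Matrix.vecMul_transpose]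
    rw [Matrix.add_mulVec, dotProduct_add, aux, aux]
  have hnn : ∀ {m : ℕ} (y : Fin m → ℝ), 0 ≤ y ⬝ᵥ y := fun y =>
    Finset.sum_nonneg fun i _ => mul_self_nonneg _
  have hq : ∀ (x : Fin n → ℝ), RicP T (fun s => x ⬝ᵥ (((U s)ᵀ * V s) *ᵥ x))
      (fun s => ((F s * V s) *ᵥ x) ⬝ᵥ ((F s * V s) *ᵥ x) +
      (((C s)ᵀ * U s) *ᵥ x) ⬝ᵥ (((C s)ᵀ * U s) *ᵥ x)) := by
    intro x
    have := hS.quad x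
    simpa only [hqd] using this
  have hσx : ∀ x : Fin n → ℝ, 0 ≤ x ⬝ᵥ (σ *ᵥ x) := fun x => by
    simpa using hσ.dotProduct_mulVec_nonneg x
  have hpsd : ∀ t ∈ Set.Icc (0 : ℝ) T, ((U t)ᵀ * V t).PosSemidef := by
    intro t ht
    refine Matrix.PosSemidef.of_dotProduct_mulVec_nonneg (by
      simpa [Matrix.IsHermitian] using hsymm t ht) fun x => ?_
    have h1 := (hq x).2 t ht
    have h2 := intervalIntegral.integral_nonneg_of_forall (μ := volume) ht.1 (fun s => add_nonneg
      (hnn ((F s * V s) *ᵥ x)) (hnn (((C s)ᵀ * U s) *ᵥ x)))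
    have h3 := hσx x
    simp only [hU0, hV0, Matrix.transpose_one, Matrix.one_mul] at h1
    simp only [star_trivial]
    linarith
  -- invertibility
  obtain ⟨P, -, hP0, -, hP, -, -⟩ := ricFund hT hA.transpose
  have hPU : RicMP T (fun s => P s * U s) (fun s => P s * (F s)ᵀ * (F s * V s)) := by
    convert hP.mul hU using 2 with s
    simp only [Matrix.mul_sub, Matrix.sub_mul, Matrix.mul_add, Matrix.add_mul, Matrix.neg_mul,
      Matrix.mul_neg, Matrix.mul_assoc, neg_sub]
    abel
  have hdet : ∀ t ∈ Set.Icc (0 : ℝ) T, (U t).det ≠ 0 := by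
    intro t ht hd
    obtain ⟨x, hx0, hx⟩ := Matrix.exists_mulVec_eq_zero_iff.2 hd
    apply hx0
    have h1 := (hq x).2 t ht
    simp only [hU0, hV0, Matrix.transpose_one, Matrix.one_mul] at h1
    rw [← Matrix.mulVec_mulVec, Matrix.dotProduct_mulVec, Matrix.vecMul_transpose, hx,
      zero_dotProduct] at h1
    have hge : ∀ s, 0 ≤ ((F s * V s) *ᵥ x) ⬝ᵥ ((F s * V s) *ᵥ x) +
      (((C s)ᵀ * U s) *ᵥ x) ⬝ᵥ (((C s)ᵀ * U s) *ᵥ x) := fun s => add_nonneg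
      (hnn ((F s * V s) *ᵥ x)) (hnn (((C s)ᵀ * U s) *ᵥ x))
    have h2 := intervalIntegral.integral_nonneg_of_forall (μ := volume) ht.1 hge
    have h3 := hσx x
    have h4 := le_antisymm (by linarith) h2
    rw [intervalIntegral.integral_eq_zero_iff_of_le_of_nonneg_ae ht.1 (ae_of_all _ hge)
      ((hq x).1.intervalIntegrable ht)] at h4
    ext i
    have h5 := (hPU.mulVec x i).2 t ht
    rw [intervalIntegral.integral_congr_ae (g := fun _ => 0)] at h5
    · simp only [hU0, hP0, Matrix.one_mul, Matrix.one_mulVec, ← Matrix.mulVec_mulVec, hx,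
        Matrix.mulVec_zero, intervalIntegral.integral_zero, add_zero] at h5
      exact h5.symm
    · rw [Filter.EventuallyEq, ae_restrict_iff' measurableSet_Ioc] at h4
      filter_upwards [h4] with s hs hs'
      rw [Set.uIoc_of_le ht.1] at hs'
      have h6 := hs hs'
      have h7 := hnn ((F s * V s) *ᵥ x)
      have h8 := hnn (((C s)ᵀ * U s) *ᵥ x)
      have h9 : ((F s * V s) *ᵥ x) ⬝ᵥ ((F s * V s) *ᵥ x) = 0 := by
        simp only [Pi.zero_apply] at h6
        linarith
      rw [dotProduct_self_eq_zero] at h9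
      rw [← Matrix.mulVec_mulVec, h9, Matrix.mulVec_zero]
      rfl
  have hUu : ∀ t ∈ Set.Icc (0 : ℝ) T, IsUnit (U t).det := fun t ht => (hdet t ht).isUnit
  have hUi : RicMB T (fun s => (U s)⁻¹) := fun i j => RicB.of_continuousOn
    (ricInv_continuousOn (fun i j => (hU i j).continuousOn) hdet i j)
  have hΦ0 : RicMB T (fun s => V s * (U s)⁻¹) := hV.ricMB.mul hUi
  have hFF := hF.transpose.mul hF
  obtain ⟨W, -, hW0, -, hW, -, -⟩ := ricFund hT
    (L := fun s => (A s)ᵀ - (F s)ᵀ * F s * (V s * (U s)⁻¹)) (hA.transpose.sub (hFF.mul hΦ0))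
  have hWU : ∀ t ∈ Set.Icc (0 : ℝ) T, W t * U t = 1 := by
    intro t ht
    have := (hW.mul hU).eq_of_zero (fun s hs => by
      have e : (U s)⁻¹ * U s = 1 := Matrix.nonsing_inv_mul _ (hUu s hs)
      simp only [Matrix.mul_sub, Matrix.sub_mul, Matrix.mul_add, Matrix.mul_assoc, e,
        Matrix.mul_one, Matrix.neg_mul, Matrix.mul_neg]
      abel) ht
    simpa [hW0, hU0] using this
  have hWi : ∀ t ∈ Set.Icc (0 : ℝ) T, (U t)⁻¹ = W t := fun t ht =>
    Matrix.inv_eq_left_inv (hWU t ht)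
  have hΦ := hV.mul hW
  have hUW : ∀ t ∈ Set.Icc (0 : ℝ) T, U t * W t = 1 := fun t ht =>
    mul_eq_one_comm.1 (hWU t ht)
  refine ⟨fun s => V s * W s, ⟨fun i j => (hΦ i j).continuousOn, fun t ht i j => ?_⟩, ?_⟩
  · have hB := hΦ.ricMB
    have hB2 : RicMB T (fun s => A s * (V s * W s) + (V s * W s) * (A s)ᵀ + C s * (C s)ᵀ
          - (V s * W s) * (F s)ᵀ * F s * (V s * W s)) :=
      (((hA.mul hB).add (hB.mul hA.transpose)).add (hC.mul hC.transpose)).sub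
        (((hB.mul hF.transpose).mul hF).mul hB)
    have h1 := (hΦ.congr (fun s hs => by
      rw [hWi s hs]
      simp only [Matrix.mul_sub, Matrix.sub_mul, Matrix.add_mul, Matrix.mul_add, Matrix.mul_assoc,
        hUW s hs, Matrix.mul_one]
      abel) hB2 i j).2 t ht
    simpa only [hV0, hW0, Matrix.mul_one] using h1
  · intro t ht
    have h1 := (hpsd t ht).conjTranspose_mul_mul_same (W t)
    have h2 : (W t)ᴴ * ((U t)ᵀ * V t) * W t = V t * W t := by
      have : (W t)ᵀ * (U t)ᵀ = 1 := by rw [← Matrix.transpose_mul, hUW t ht, Matrix.transpose_one]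
      rw [Matrix.conjTranspose_eq_transpose_of_trivial, ← Matrix.mul_assoc, this, Matrix.one_mul]
    rw [h2] at h1
    exact h1

end RicMain

theorem stmt8 (n r d : ℕ) (hn : 0 < n) (hr : 0 < r) (hd : 0 < d)
    (T : ℝ) (hT : 0 < T)
    (Abar : ℝ → Matrix (Fin n) (Fin n) ℝ)
    (F : ℝ → Matrix (Fin r) (Fin n) ℝ)
    (Cbar : ℝ → Matrix (Fin n) (Fin d) ℝ)
    (hAmeas : ∀ i j, Measurable fun s => Abar s i j)
    (hFmeas : ∀ i j, Measurable fun s => F s i j)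
    (hCmeas : ∀ i j, Measurable fun s => Cbar s i j)
    (hAbd : ∃ K, ∀ s ∈ Set.Icc (0 : ℝ) T, ∀ i j, |Abar s i j| ≤ K)
    (hFbd : ∃ K, ∀ s ∈ Set.Icc (0 : ℝ) T, ∀ i j, |F s i j| ≤ K)
    (hCbd : ∃ K, ∀ s ∈ Set.Icc (0 : ℝ) T, ∀ i j, |Cbar s i j| ≤ K)
    (σ : Matrix (Fin n) (Fin n) ℝ) (hσ : σ.PosSemidef) :
    ∃ Φ : ℝ → Matrix (Fin n) (Fin n) ℝ,
      RiccatiIntSol n r d T Abar F Cbar σ Φ ∧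
        (∀ Ψ : ℝ → Matrix (Fin n) (Fin n) ℝ,
          RiccatiIntSol n r d T Abar F Cbar σ Ψ → ∀ t ∈ Set.Icc (0 : ℝ) T, Ψ t = Φ t) ∧
        ∀ t ∈ Set.Icc (0 : ℝ) T, (Φ t).PosSemidef := by
  have hA : RicMB T Abar := fun i j => ⟨(hAmeas i j).aestronglyMeasurable,
    hAbd.imp fun K hK s hs => hK s hs i j⟩
  have hF : RicMB T F := fun i j => ⟨(hFmeas i j).aestronglyMeasurable,
    hFbd.imp fun K hK s hs => hK s hs i j⟩
  have hC : RicMB T Cbar := fun i j => ⟨(hCmeas i j).aestronglyMeasurable,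
    hCbd.imp fun K hK s hs => hK s hs i j⟩
  obtain ⟨Φ, hΦ, hpsd⟩ := ric_exists hT hA hF hC hσ
  exact ⟨Φ, hΦ, fun Ψ hΨ => ric_unique hT hA hF hC hΦ hΨ, hpsd⟩
end

section
/- Let D, n, m be positive integers, T > 0, δ > 0, and let Π = (π^{ℓj})_{ℓ,j=1}^D be a real D×D matrix with π^{ℓj} ≥ 0 for all ℓ ≠ j and π^{ℓℓ} = −Σ_{j≠ℓ} π^{ℓj} for every ℓ. For each ℓ ∈ {1,…,D}, let A_ℓ : [0,T] → ℝ^{n×n}, B_ℓ : [0,T] → ℝ^{n×m}, H_ℓ : [0,T] → ℝ^{n×n}, G_ℓ : [0,T] → ℝ^{m×n}, R_ℓ : [0,T] → ℝ^{m×m} be continuous and bounded, with H_ℓ(t) and R_ℓ(t) symmetric, R_ℓ(t) − δ·I positive semidefinite, and H_ℓ(t) − G_ℓ(t)ᵀ R_ℓ(t)⁻¹ G_ℓ(t) positive semidefinite for every t; let S_ℓ be an n×n symmetric positive semidefinite matrix. Then there exists a unique family of continuously differentiable functions Λ_ℓ : [0,T] → ℝ^{n×n}, ℓ ∈ {1,…,D},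 satisfying, for every ℓ and every t ∈ [0,T], Λ_ℓ'(t) + A_ℓ(t)ᵀΛ_ℓ(t) + Λ_ℓ(t)A_ℓ(t) + H_ℓ(t) − (B_ℓ(t)ᵀΛ_ℓ(t) + G_ℓ(t))ᵀ R_ℓ(t)⁻¹ (B_ℓ(t)ᵀΛ_ℓ(t) + G_ℓ(t)) + Σ_{j=1}^D π^{ℓj} Λ_j(t) = 0 with Λ_ℓ(T) = S_ℓ; moreover, Λ_ℓ(t) is symmetric positive semidefinite for every ℓ and every t ∈ [0,T]. -/
open Matrix

/-- `Λ` is a (continuously differentiable) solution on `[0,T]` of the system of coupled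
Riccati equations
`Λ_ℓ' + A_ℓᵀΛ_ℓ + Λ_ℓA_ℓ + H_ℓ − (B_ℓᵀΛ_ℓ + G_ℓ)ᵀ R_ℓ⁻¹ (B_ℓᵀΛ_ℓ + G_ℓ) + Σ_j π^{ℓj} Λ_j = 0`
with terminal conditions `Λ_ℓ(T) = S_ℓ`. -/
def CoupledRiccatiSol (D n m : ℕ) (T : ℝ) (P : Fin D → Fin D → ℝ)
    (A : Fin D → ℝ → Matrix (Fin n) (Fin n) ℝ)
    (B : Fin D → ℝ → Matrix (Fin n) (Fin m) ℝ)
    (H : Fin D → ℝ → Matrix (Fin n) (Fin n) ℝ)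
    (G : Fin D → ℝ → Matrix (Fin m) (Fin n) ℝ)
    (R : Fin D → ℝ → Matrix (Fin m) (Fin m) ℝ)
    (S : Fin D → Matrix (Fin n) (Fin n) ℝ)
    (Λ : Fin D → ℝ → Matrix (Fin n) (Fin n) ℝ) : Prop :=
  (∀ ℓ, Λ ℓ T = S ℓ) ∧
    ∀ ℓ, ∀ t ∈ Set.Icc (0 : ℝ) T, ∀ i j,
      HasDerivAt (fun s => Λ ℓ s i j)
        (-(((A ℓ t)ᵀ * Λ ℓ t + Λ ℓ t * A ℓ t + H ℓ t
            - ((B ℓ t)ᵀ * Λ ℓ t + G ℓ t)ᵀ * (R ℓ t)⁻¹ * ((B ℓ t)ᵀ * Λ ℓ t + G ℓ t)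
            + ∑ j', P ℓ j' • Λ j' t) i j)) t


lemma ric_quad_bound {n : ℕ} (C : Matrix (Fin n) (Fin n) ℝ) (K : ℝ) (hK : ∀ i j, |C i j| ≤ K)
    (z : Fin n → ℝ) : |z ⬝ᵥ (C *ᵥ z)| ≤ (n * K) * (z ⬝ᵥ z) := by
  have h1 : z ⬝ᵥ (C *ᵥ z) = ∑ i, ∑ j, z i * C i j * z j := by
    simp [dotProduct, mulVec, Finset.mul_sum, mul_assoc]
  have h2 : ∑ i : Fin n, ∑ j : Fin n, K * ((z i ^ 2 + z j ^ 2) / 2) = (n * K) * (z ⬝ᵥ z) := by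
    simp only [dotProduct, mul_add, add_div, Finset.sum_add_distrib, Finset.sum_const,
      Finset.card_univ, Fintype.card_fin, nsmul_eq_mul, ← Finset.mul_sum, ← Finset.sum_div, ← pow_two]
    ring
  rw [h1, ← h2]
  refine (Finset.abs_sum_le_sum_abs _ _).trans (Finset.sum_le_sum fun i _ => ?_)
  refine (Finset.abs_sum_le_sum_abs _ _).trans (Finset.sum_le_sum fun j _ => ?_)
  have h3 : |z i * C i j * z j| = |C i j| * (|z i| * |z j|) := by
    rw [abs_mul, abs_mul]; ring
  rw [h3]
  have h4 : |z i| * |z j| ≤ (z i ^ 2 + z j ^ 2) / 2 := by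
    nlinarith [sq_nonneg (|z i| - |z j|), sq_abs (z i), sq_abs (z j)]
  have := abs_nonneg (C i j)
  exact mul_le_mul (hK i j) h4 (by positivity) (this.trans (hK i j))

lemma ric_psd_iff {n : ℕ} (M : Matrix (Fin n) (Fin n) ℝ) :
    M.PosSemidef ↔ M.IsSymm ∧ ∀ x, 0 ≤ x ⬝ᵥ (M *ᵥ x) := by
  rw [Matrix.posSemidef_iff_dotProduct_mulVec]
  simp [Matrix.IsHermitian, Matrix.IsSymm]

lemma ric_quad_deriv {n : ℕ} (X : ℝ → Matrix (Fin n) (Fin n) ℝ) (X' : Matrix (Fin n) (Fin n) ℝ)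
    (t : ℝ) (h : ∀ i j, HasDerivAt (fun s => X s i j) (X' i j) t) (z : Fin n → ℝ) :
    HasDerivAt (fun s => z ⬝ᵥ (X s *ᵥ z)) (z ⬝ᵥ (X' *ᵥ z)) t := by
  simp only [dotProduct, mulVec]
  refine HasDerivAt.fun_sum fun i _ => HasDerivAt.const_mul _ ?_
  exact HasDerivAt.fun_sum fun j _ => (h i j).mul_const _

/-- Strict version of the comparison principle. -/
lemma ric_strict {D n : ℕ} (s T : ℝ) (P : Fin D → Fin D → ℝ)
    (hPoff : ∀ ℓ j, ℓ ≠ j → 0 ≤ P ℓ j)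
    (C Q Y : Fin D → ℝ → Matrix (Fin n) (Fin n) ℝ)
    (hQ : ∀ ℓ, ∀ t ∈ Set.Icc s T, ∀ z : Fin n → ℝ, z ≠ 0 → 0 < z ⬝ᵥ (Q ℓ t *ᵥ z))
    (hsymm : ∀ ℓ, ∀ t ∈ Set.Icc s T, (Y ℓ t).IsSymm)
    (hT : ∀ ℓ, ∀ z : Fin n → ℝ, z ≠ 0 → 0 < z ⬝ᵥ (Y ℓ T *ᵥ z))
    (hder : ∀ ℓ, ∀ t ∈ Set.Icc s T, ∀ i j, HasDerivAt (fun u => Y ℓ u i j)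
      (-((C ℓ t)ᵀ * Y ℓ t + Y ℓ t * C ℓ t + Q ℓ t + ∑ j', P ℓ j' • Y j' t) i j) t) :
    ∀ ℓ, ∀ t ∈ Set.Icc s T, ∀ z : Fin n → ℝ, z ≠ 0 → 0 < z ⬝ᵥ (Y ℓ t *ᵥ z) := by
  by_contra! hcon
  obtain ⟨ℓ₁, t₁, ht₁, z₁, hz₁, hneg₁⟩ := hcon
  have hcontY : ∀ ℓ i j, ContinuousOn (fun u => Y ℓ u i j) (Set.Icc s T) := fun ℓ i j t ht =>
    (hder ℓ t ht i j).continuousAt.continuousWithinAt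
  -- the compact set of bad points
  let B : Fin D → Set (ℝ × (Fin n → ℝ)) := fun ℓ =>
    {p | p ∈ Set.Icc s T ×ˢ Metric.sphere (0 : Fin n → ℝ) 1 ∧ p.2 ⬝ᵥ (Y ℓ p.1 *ᵥ p.2) ∈ Set.Iic 0}
  have hKc : IsCompact (Set.Icc s T ×ˢ Metric.sphere (0 : Fin n → ℝ) 1) :=
    isCompact_Icc.prod (isCompact_sphere _ _)
  have hBc : ∀ ℓ, IsCompact (B ℓ) := by
    intro ℓ
    refine hKc.of_isClosed_subset ?_ (fun p hp => hp.1)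
    have : ContinuousOn (fun p : ℝ × (Fin n → ℝ) => p.2 ⬝ᵥ (Y ℓ p.1 *ᵥ p.2))
        (Set.Icc s T ×ˢ Metric.sphere (0 : Fin n → ℝ) 1) := by
      simp only [dotProduct, mulVec]
      refine continuousOn_finsetSum _ fun i _ => ContinuousOn.mul (by fun_prop) ?_
      refine continuousOn_finsetSum _ fun j _ => ContinuousOn.mul ?_ (by fun_prop)
      exact (hcontY ℓ i j).comp continuousOn_fst (fun p hp => hp.1)
    exact this.preimage_isClosed_of_isClosed hKc.isClosed isClosed_Iic
  let BT : Set ℝ := ⋃ ℓ, Prod.fst '' B ℓ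
  have hBTc : IsCompact BT := isCompact_iUnion fun ℓ => (hBc ℓ).image continuous_fst
  have hscale : ∀ ℓ t, ∀ z : Fin n → ℝ, t ∈ Set.Icc s T → z ≠ 0 → z ⬝ᵥ (Y ℓ t *ᵥ z) ≤ 0 → t ∈ BT := by
    intro ℓ t z ht hz hneg
    refine Set.mem_iUnion.2 ⟨ℓ, (t, ‖z‖⁻¹ • z), ⟨⟨ht, ?_⟩, ?_⟩, rfl⟩
    · simp [norm_smul, norm_ne_zero_iff.2 hz]
    · simp only [mulVec_smul, dotProduct_smul, smul_dotProduct, smul_eq_mul, Set.mem_Iic]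
      have : 0 ≤ ‖z‖⁻¹ := by positivity
      exact mul_nonpos_of_nonneg_of_nonpos this (mul_nonpos_of_nonneg_of_nonpos this hneg)
  obtain ⟨t₀, ht₀⟩ := hBTc.exists_isGreatest ⟨t₁, hscale ℓ₁ t₁ z₁ ht₁ hz₁ hneg₁⟩
  obtain ⟨ℓ, ⟨⟨t₀', z⟩, ⟨⟨htI, hzs⟩, hneg⟩, rfl⟩⟩ := Set.mem_iUnion.1 ht₀.1
  simp only [Set.mem_Iic] at hneg htI hzs ht₀ ⊢
  have hz : z ≠ 0 := by
    rintro rfl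
    simp at hzs
  have hlt : t₀' < T := by
    refine lt_of_le_of_ne htI.2 ?_
    rintro rfl
    exact absurd (hT ℓ z hz) (not_lt.2 hneg)
  have hafter : ∀ ℓ t, t ∈ Set.Ioc t₀' T → ∀ w : Fin n → ℝ, w ≠ 0 → 0 < w ⬝ᵥ (Y ℓ t *ᵥ w) := by
    intro ℓ t ht w hw
    by_contra! h
    have := ht₀.2 (hscale ℓ t w ⟨htI.1.trans ht.1.le, ht.2⟩ hw h)
    exact absurd ht.1 (not_lt.2 this)
  have hev : ∀ᶠ t in nhdsWithin t₀' (Set.Ioi t₀'), t ∈ Set.Ioc t₀' T :=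
    Ioc_mem_nhdsGT hlt
  have hnn : ∀ ℓ, ∀ w : Fin n → ℝ, 0 ≤ w ⬝ᵥ (Y ℓ t₀' *ᵥ w) := by
    intro ℓ w
    by_cases hw : w = 0
    · simp [hw]
    have hc := (ric_quad_deriv (Y ℓ) _ t₀' (hder ℓ t₀' htI) w).continuousAt.tendsto.mono_left
      (nhdsWithin_le_nhds (s := Set.Ioi t₀'))
    exact ge_of_tendsto hc (hev.mono fun t ht => (hafter ℓ t ht w hw).le)
  have hpsd : (Y ℓ t₀').PosSemidef := (ric_psd_iff _).2 ⟨hsymm ℓ t₀' htI, hnn ℓ⟩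
  have hzero : z ⬝ᵥ (Y ℓ t₀' *ᵥ z) = 0 := le_antisymm hneg (hnn ℓ z)
  have hker : Y ℓ t₀' *ᵥ z = 0 := by
    have := (hpsd.dotProduct_mulVec_zero_iff z).1 (by simpa using hzero)
    exact this
  have hd := ric_quad_deriv (Y ℓ) _ t₀' (hder ℓ t₀' htI) z
  have hdneg : z ⬝ᵥ ((-((C ℓ t₀')ᵀ * Y ℓ t₀' + Y ℓ t₀' * C ℓ t₀' + Q ℓ t₀' + ∑ j', P ℓ j' • Y j' t₀')) *ᵥ z) < 0 := by
    have e1 : z ⬝ᵥ (((C ℓ t₀')ᵀ * Y ℓ t₀') *ᵥ z) = 0 := by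
      rw [← mulVec_mulVec, hker]; simp
    have e2 : z ⬝ᵥ ((Y ℓ t₀' * C ℓ t₀') *ᵥ z) = 0 := by
      rw [← mulVec_mulVec, dotProduct_mulVec, ← mulVec_transpose, (hsymm ℓ t₀' htI).eq, hker]; simp
    have e3 : 0 ≤ z ⬝ᵥ ((∑ j', P ℓ j' • Y j' t₀') *ᵥ z) := by
      rw [sum_mulVec, dotProduct_sum]
      refine Finset.sum_nonneg fun j _ => ?_
      rw [smul_mulVec, dotProduct_smul, smul_eq_mul]
      by_cases hj : ℓ = j
      · subst hj; rw [hzero]; simp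
      · exact mul_nonneg (hPoff ℓ j hj) (hnn j z)
    have e4 := hQ ℓ t₀' htI z hz
    rw [neg_mulVec, dotProduct_neg, add_mulVec, add_mulVec, add_mulVec, dotProduct_add,
      dotProduct_add, dotProduct_add, e1, e2]
    linarith
  have hslope := (hd.tendsto_slope).mono_left (nhdsWithin_mono t₀' (s := Set.Ioi t₀') (fun x hx => ne_of_gt hx))
  have h1 : ∀ᶠ t in nhdsWithin t₀' (Set.Ioi t₀'), slope (fun u => z ⬝ᵥ (Y ℓ u *ᵥ z)) t₀' t < 0 :=
    hslope.eventually_lt_const hdneg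
  obtain ⟨t, hts, htI'⟩ := (h1.and hev).exists
  rw [slope_def_field, hzero, sub_zero] at hts
  have := div_pos (hafter ℓ t htI' z hz) (sub_pos.2 htI'.1)
  linarith

/-- Comparison principle. -/
lemma ric_pos {D n : ℕ} (s T : ℝ) (P : Fin D → Fin D → ℝ)
    (hPoff : ∀ ℓ j, ℓ ≠ j → 0 ≤ P ℓ j) (hPsum : ∀ ℓ, ∑ j, P ℓ j = 0)
    (C Q X : Fin D → ℝ → Matrix (Fin n) (Fin n) ℝ)
    (K : ℝ) (hC : ∀ ℓ, ∀ t ∈ Set.Icc s T, ∀ i j, |C ℓ t i j| ≤ K)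
    (hQ : ∀ ℓ, ∀ t ∈ Set.Icc s T, ∀ z : Fin n → ℝ, 0 ≤ z ⬝ᵥ (Q ℓ t *ᵥ z))
    (hsymm : ∀ ℓ, ∀ t ∈ Set.Icc s T, (X ℓ t).IsSymm)
    (hT : ∀ ℓ, ∀ z : Fin n → ℝ, 0 ≤ z ⬝ᵥ (X ℓ T *ᵥ z))
    (hder : ∀ ℓ, ∀ t ∈ Set.Icc s T, ∀ i j, HasDerivAt (fun u => X ℓ u i j)
      (-((C ℓ t)ᵀ * X ℓ t + X ℓ t * C ℓ t + Q ℓ t + ∑ j', P ℓ j' • X j' t) i j) t) :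
    ∀ ℓ, ∀ t ∈ Set.Icc s T, ∀ z : Fin n → ℝ, 0 ≤ z ⬝ᵥ (X ℓ t *ᵥ z) := by
  intro ℓ t ht z
  by_cases hz : z = 0
  · simp [hz]
  set c : ℝ := 2 * (n * K) + 1 with hc
  have hzz : ∀ w : Fin n → ℝ, w ≠ 0 → 0 < w ⬝ᵥ w := fun w hw => by
    refine lt_of_le_of_ne ?_ ?_
    · exact Finset.sum_nonneg fun i _ => mul_self_nonneg _
    · intro h
      exact hw (dotProduct_self_eq_zero.1 h.symm)
  have key : ∀ ε : ℝ, 0 < ε → 0 < z ⬝ᵥ (X ℓ t *ᵥ z) + ε * (Real.exp (c * (T - t)) * (z ⬝ᵥ z)) := by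
    intro ε hε
    let e : ℝ → ℝ := fun u => ε * Real.exp (c * (T - u))
    have he : ∀ u, 0 < e u := fun u => by positivity
    have hed : ∀ u, HasDerivAt e (-(c * e u)) u := by
      intro u
      have h1 : HasDerivAt (fun u => c * (T - u)) (c * (0 - 1)) u :=
        (((hasDerivAt_const u T).sub (hasDerivAt_id u))).const_mul c
      refine HasDerivAt.congr_deriv (f := fun u => ε * Real.exp (c * (T - u))) (h1.exp.const_mul ε) ?_
      simp only [e]; ring
    have := ric_strict s T P hPoff C
      (fun ℓ u => Q ℓ u + e u • (c • (1 : Matrix (Fin n) (Fin n) ℝ) - (C ℓ u)ᵀ - C ℓ u))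
      (fun ℓ u => X ℓ u + e u • 1) ?_ ?_ ?_ ?_ ℓ t ht z hz
    · simp only [add_mulVec, dotProduct_add, smul_mulVec, one_mulVec, dotProduct_smul,
        smul_eq_mul, e] at this
      linarith
    · intro ℓ u hu w hw
      simp only [add_mulVec, dotProduct_add, smul_mulVec, one_mulVec, dotProduct_smul,
        smul_eq_mul, sub_mulVec, dotProduct_sub]
      have h1 := hQ ℓ u hu w
      have h2 := abs_le.1 (ric_quad_bound (C ℓ u) K (hC ℓ u hu) w)
      have h3 : w ⬝ᵥ ((C ℓ u)ᵀ *ᵥ w) = w ⬝ᵥ (C ℓ u *ᵥ w) := by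
        rw [mulVec_transpose, dotProduct_comm, dotProduct_mulVec]
      rw [h3]
      have h4 := hzz w hw
      have : 0 < c * w ⬝ᵥ w - w ⬝ᵥ (C ℓ u *ᵥ w) - w ⬝ᵥ (C ℓ u *ᵥ w) := by
        rw [hc]; linarith
      have := mul_pos (he u) this
      linarith
    · intro ℓ u hu
      have := hsymm ℓ u hu
      simp only [IsSymm, transpose_add, transpose_smul, transpose_one, this.eq]
    · intro ℓ w hw
      simp only [add_mulVec, dotProduct_add, smul_mulVec, one_mulVec, dotProduct_smul,
        smul_eq_mul]
      have := mul_pos (he T) (hzz w hw)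
      linarith [hT ℓ w]
    · intro ℓ u hu i j
      have h1 := (hder ℓ u hu i j).add ((hed u).mul_const ((1 : Matrix (Fin n) (Fin n) ℝ) i j))
      have h2 : ∑ j', P ℓ j' • (X j' u + e u • (1 : Matrix (Fin n) (Fin n) ℝ)) = ∑ j', P ℓ j' • X j' u := by
        simp only [smul_add, Finset.sum_add_distrib, ← Finset.sum_smul, hPsum, zero_smul, add_zero]
      refine HasDerivAt.congr_deriv (f := fun u => X ℓ u i j + e u * (1 : Matrix (Fin n) (Fin n) ℝ) i j) h1 ?_
      rw [h2]
      simp only [Matrix.mul_add, Matrix.add_mul, Matrix.mul_smul, Matrix.smul_mul, Matrix.mul_one,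
        Matrix.one_mul, Matrix.add_apply, Matrix.sub_apply, Matrix.smul_apply, smul_eq_mul]
      ring
  refine le_of_forall_pos_lt_add fun η hη => ?_
  have hp : 0 < Real.exp (c * (T - t)) * (z ⬝ᵥ z) := mul_pos (Real.exp_pos _) (hzz z hz)
  have := key (η / (Real.exp (c * (T - t)) * (z ⬝ᵥ z))) (by positivity)
  rwa [div_mul_cancel₀ _ hp.ne'] at this

/-- The right-hand side of the Riccati system, with `W` in place of `R⁻¹`. -/
def ricRHS {D n m : ℕ} (P : Fin D → Fin D → ℝ)
    (A : Fin D → Matrix (Fin n) (Fin n) ℝ) (B : Fin D → Matrix (Fin n) (Fin m) ℝ)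
    (H : Fin D → Matrix (Fin n) (Fin n) ℝ) (G : Fin D → Matrix (Fin m) (Fin n) ℝ)
    (W : Fin D → Matrix (Fin m) (Fin m) ℝ) (X : Fin D → Matrix (Fin n) (Fin n) ℝ) (ℓ : Fin D) :
    Matrix (Fin n) (Fin n) ℝ :=
  (A ℓ)ᵀ * X ℓ + X ℓ * A ℓ + H ℓ - ((B ℓ)ᵀ * X ℓ + G ℓ)ᵀ * W ℓ * ((B ℓ)ᵀ * X ℓ + G ℓ)
    + ∑ j', P ℓ j' • X j'

/-- Space of families of matrices, with the sup norm. -/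
abbrev RicE (D n m : ℕ) := Fin D → Fin n → Fin m → ℝ

/-- Space of coefficients. -/
abbrev RicCoef (D n m : ℕ) := RicE D n n × RicE D n m × RicE D n n × RicE D m n × RicE D m m

/-- The vector field as a function of coefficients and state. -/
def ricF {D n m : ℕ} (P : Fin D → Fin D → ℝ) (p : RicCoef D n m × RicE D n n) : RicE D n n :=
  fun ℓ i j => -(ricRHS P (fun l => Matrix.of (p.1.1 l)) (fun l => Matrix.of (p.1.2.1 l))
    (fun l => Matrix.of (p.1.2.2.1 l)) (fun l => Matrix.of (p.1.2.2.2.1 l))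
    (fun l => Matrix.of (p.1.2.2.2.2 l)) (fun l => Matrix.of (p.2 l)) ℓ i j)

lemma ricF_contDiff {D n m : ℕ} (P : Fin D → Fin D → ℝ) :
    ContDiff ℝ 1 (ricF (n := n) (m := m) P) := by
  refine contDiff_pi.2 fun ℓ => contDiff_pi.2 fun i => contDiff_pi.2 fun j => ?_
  simp only [ricF, ricRHS, Matrix.mul_apply, Matrix.add_apply, Matrix.sub_apply, Matrix.transpose_apply,
    Matrix.sum_apply, Matrix.smul_apply, Matrix.of_apply, smul_eq_mul]
  fun_prop

/-- The data and hypotheses. -/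
structure RicData (D n m : ℕ) where
  T : ℝ
  P : Fin D → Fin D → ℝ
  A : Fin D → ℝ → Matrix (Fin n) (Fin n) ℝ
  B : Fin D → ℝ → Matrix (Fin n) (Fin m) ℝ
  H : Fin D → ℝ → Matrix (Fin n) (Fin n) ℝ
  G : Fin D → ℝ → Matrix (Fin m) (Fin n) ℝ
  W : Fin D → ℝ → Matrix (Fin m) (Fin m) ℝ
  S : Fin D → Matrix (Fin n) (Fin n) ℝ
  hT : 0 < T
  hPoff : ∀ ℓ j, ℓ ≠ j → 0 ≤ P ℓ j
  hPsum : ∀ ℓ, ∑ j, P ℓ j = 0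
  hA : ∀ ℓ i j, ContinuousOn (fun t => A ℓ t i j) (Set.Icc (0 : ℝ) T)
  hB : ∀ ℓ i j, ContinuousOn (fun t => B ℓ t i j) (Set.Icc (0 : ℝ) T)
  hH : ∀ ℓ i j, ContinuousOn (fun t => H ℓ t i j) (Set.Icc (0 : ℝ) T)
  hG : ∀ ℓ i j, ContinuousOn (fun t => G ℓ t i j) (Set.Icc (0 : ℝ) T)
  hW : ∀ ℓ i j, ContinuousOn (fun t => W ℓ t i j) (Set.Icc (0 : ℝ) T)
  hHs : ∀ ℓ, ∀ t ∈ Set.Icc (0 : ℝ) T, (H ℓ t).IsSymm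
  hWp : ∀ ℓ, ∀ t ∈ Set.Icc (0 : ℝ) T, (W ℓ t).PosSemidef
  hHG : ∀ ℓ, ∀ t ∈ Set.Icc (0 : ℝ) T, (H ℓ t - (G ℓ t)ᵀ * W ℓ t * G ℓ t).PosSemidef
  hS : ∀ ℓ, (S ℓ).PosSemidef

namespace RicData

variable {D n m : ℕ} (d : RicData D n m)

/-- Coefficients as a single function. -/
def coef (t : ℝ) : RicCoef D n m :=
  (fun l => d.A l t, fun l => d.B l t, fun l => d.H l t, fun l => d.G l t, fun l => d.W l t)

lemma coef_cont : ContinuousOn d.coef (Set.Icc 0 d.T) := by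
  refine ContinuousOn.prodMk ?_ (ContinuousOn.prodMk ?_ (ContinuousOn.prodMk ?_
    (ContinuousOn.prodMk ?_ ?_))) <;>
  refine continuousOn_pi.2 fun l => continuousOn_pi.2 fun i => continuousOn_pi.2 fun j => ?_
  · exact d.hA l i j
  · exact d.hB l i j
  · exact d.hH l i j
  · exact d.hG l i j
  · exact d.hW l i j

/-- Right-hand side at time `t`. -/
def rhs (t : ℝ) (X : Fin D → Matrix (Fin n) (Fin n) ℝ) (ℓ : Fin D) : Matrix (Fin n) (Fin n) ℝ :=
  ricRHS d.P (fun l => d.A l t) (fun l => d.B l t) (fun l => d.H l t) (fun l => d.G l t)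
    (fun l => d.W l t) X ℓ

/-- Being a solution on `[s,T]`. -/
def Sol (s : ℝ) (X : Fin D → ℝ → Matrix (Fin n) (Fin n) ℝ) : Prop :=
  (∀ ℓ, X ℓ d.T = d.S ℓ) ∧ ∀ ℓ, ∀ t ∈ Set.Icc s d.T, ∀ i j,
    HasDerivAt (fun u => X ℓ u i j) (-(d.rhs t (fun l => X l t) ℓ i j)) t

lemma lip (M : ℝ) : ∃ K : NNReal, LipschitzOnWith K (ricF d.P)
    ((d.coef '' Set.Icc 0 d.T) ×ˢ Metric.closedBall (0 : RicE D n n) M) :=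
  LocallyLipschitzOn.exists_lipschitzOnWith_of_compact
    ((isCompact_Icc.image_of_continuousOn d.coef_cont).prod (isCompact_closedBall _ _))
    ((ricF_contDiff d.P).locallyLipschitz.locallyLipschitzOn)

lemma lip' (M : ℝ) : ∃ K : NNReal, ∀ t ∈ Set.Icc 0 d.T,
    LipschitzOnWith K (fun x => ricF d.P (d.coef t, x)) (Metric.closedBall (0 : RicE D n n) M) := by
  obtain ⟨K, hK⟩ := d.lip M
  refine ⟨K, fun t ht x hx y hy => ?_⟩
  have := hK (x := (d.coef t, x)) ⟨⟨t, ht, rfl⟩, hx⟩ (y := (d.coef t, y)) ⟨⟨t, ht, rfl⟩, hy⟩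
  simpa [Prod.edist_eq] using this

/-- A family of matrix functions as a curve in the normed space. -/
def curve (X : Fin D → ℝ → Matrix (Fin n) (Fin n) ℝ) (u : ℝ) : RicE D n n := fun l i j => X l u i j

lemma ricF_curve (X : Fin D → ℝ → Matrix (Fin n) (Fin n) ℝ) (t : ℝ) (ℓ : Fin D) (i j : Fin n) :
    ricF d.P (d.coef t, curve X t) ℓ i j = -(d.rhs t (fun l => X l t) ℓ i j) := rfl

lemma Sol.hasDerivAt {d : RicData D n m} {s : ℝ} {X : Fin D → ℝ → Matrix (Fin n) (Fin n) ℝ}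
    (h : d.Sol s X) {t : ℝ} (ht : t ∈ Set.Icc s d.T) :
    HasDerivAt (curve X) (ricF d.P (d.coef t, curve X t)) t := by
  refine hasDerivAt_pi.2 fun l => hasDerivAt_pi.2 fun i => hasDerivAt_pi.2 fun j => ?_
  rw [ricF_curve]
  exact h.2 l t ht i j

lemma uniq {s : ℝ} (hs : 0 ≤ s) {X Y : Fin D → ℝ → Matrix (Fin n) (Fin n) ℝ} (hX : d.Sol s X)
    (hY : d.Sol s Y) : ∀ ℓ, ∀ t ∈ Set.Icc s d.T, X ℓ t = Y ℓ t := by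
  have cX : ContinuousOn (curve X) (Set.Icc s d.T) :=
    fun t ht => (hX.hasDerivAt ht).continuousAt.continuousWithinAt
  have cY : ContinuousOn (curve Y) (Set.Icc s d.T) :=
    fun t ht => (hY.hasDerivAt ht).continuousAt.continuousWithinAt
  obtain ⟨M₁, h₁⟩ := isCompact_Icc.exists_bound_of_continuousOn cX
  obtain ⟨M₂, h₂⟩ := isCompact_Icc.exists_bound_of_continuousOn cY
  obtain ⟨K, hK⟩ := d.lip' (max M₁ M₂)
  have := ODE_solution_unique_of_mem_Icc_left (v := fun t x => ricF d.P (d.coef t, x))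
    (s := fun _ => Metric.closedBall (0 : RicE D n n) (max M₁ M₂)) (K := K)
    (fun t ht => hK t ⟨hs.trans ht.1.le, ht.2⟩) cX
    (fun t ht => (hX.hasDerivAt ⟨ht.1.le, ht.2⟩).hasDerivWithinAt)
    (fun t ht => by
      simpa using Or.inl (h₁ t ⟨ht.1.le, ht.2⟩)) cY
    (fun t ht => (hY.hasDerivAt ⟨ht.1.le, ht.2⟩).hasDerivWithinAt)
    (fun t ht => by
      simpa using Or.inr (h₂ t ⟨ht.1.le, ht.2⟩))
    (by
      funext l i j
      simp only [curve, hX.1 l, hY.1 l])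
  intro ℓ t ht
  ext i j
  exact congrFun (congrFun (congrFun (this ht) ℓ) i) j

lemma wsymm {ℓ : Fin D} {t : ℝ} (ht : t ∈ Set.Icc 0 d.T) : (d.W ℓ t)ᵀ = d.W ℓ t :=
  ((ric_psd_iff _).1 (d.hWp ℓ t ht)).1

/-- The linear part of the data. -/
def lin : RicData D n m where
  T := d.T
  P := d.P
  A := d.A
  B := 0
  H := 0
  G := 0
  W := 0
  S := 0
  hT := d.hT
  hPoff := d.hPoff
  hPsum := d.hPsum
  hA := d.hA
  hB := fun _ _ _ => continuousOn_const
  hH := fun _ _ _ => continuousOn_const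
  hG := fun _ _ _ => continuousOn_const
  hW := fun _ _ _ => continuousOn_const
  hHs := fun _ _ _ => by simp [Matrix.IsSymm]
  hWp := fun _ _ _ => by simpa using Matrix.PosSemidef.zero
  hHG := fun _ _ _ => by simpa using Matrix.PosSemidef.zero
  hS := fun _ => by simpa using Matrix.PosSemidef.zero

lemma lin_rhs (t : ℝ) (X : Fin D → Matrix (Fin n) (Fin n) ℝ) (ℓ : Fin D) :
    d.lin.rhs t X ℓ = (d.A ℓ t)ᵀ * X ℓ + X ℓ * d.A ℓ t + ∑ j', d.P ℓ j' • X j' := by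
  simp [rhs, ricRHS, lin]

lemma Sol.symm {d : RicData D n m} {s : ℝ} (hs : 0 ≤ s)
    {X : Fin D → ℝ → Matrix (Fin n) (Fin n) ℝ} (hX : d.Sol s X) :
    ∀ ℓ, ∀ t ∈ Set.Icc s d.T, (X ℓ t).IsSymm := by
  have h1 : d.lin.Sol s (fun ℓ t => (X ℓ t)ᵀ - X ℓ t) := by
    refine ⟨fun ℓ => ?_, fun ℓ t ht i j => ?_⟩
    · have : X ℓ d.lin.T = d.S ℓ := hX.1 ℓ
      simp only [this]
      rw [((ric_psd_iff _).1 (d.hS ℓ)).1]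
      exact sub_self _
    · have ht' : t ∈ Set.Icc 0 d.T := ⟨hs.trans ht.1, ht.2⟩
      refine ((hX.2 ℓ t ht j i).sub (hX.2 ℓ t ht i j)).congr_deriv ?_
      have : d.lin.rhs t (fun l => (X l t)ᵀ - X l t) ℓ =
          (d.rhs t (fun l => X l t) ℓ)ᵀ - d.rhs t (fun l => X l t) ℓ := by
        rw [lin_rhs]
        simp only [rhs, ricRHS, transpose_add, transpose_sub, transpose_mul, transpose_transpose,
          (d.hHs ℓ t ht').eq, d.wsymm ht', transpose_sum, transpose_smul, smul_sub,
          Finset.sum_sub_distrib, Matrix.mul_sub, Matrix.sub_mul, Matrix.mul_assoc]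
        abel
      rw [this]
      simp only [Matrix.sub_apply, Matrix.transpose_apply]
      ring
  have h2 : d.lin.Sol s (fun _ _ => 0) := by
    refine ⟨fun ℓ => rfl, fun ℓ t ht i j => ?_⟩
    refine (hasDerivAt_const t (0 : ℝ)).congr_deriv ?_
    rw [lin_rhs]
    simp
  exact fun ℓ t ht => sub_eq_zero.1 (d.lin.uniq hs h1 h2 ℓ t ht)

/-- The closed loop matrix. -/
def cl (X : Fin D → ℝ → Matrix (Fin n) (Fin n) ℝ) (ℓ : Fin D) (t : ℝ) : Matrix (Fin n) (Fin n) ℝ :=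
  d.A ℓ t - d.B ℓ t * d.W ℓ t * ((d.B ℓ t)ᵀ * X ℓ t + d.G ℓ t)

lemma Sol.nonneg {d : RicData D n m} {s : ℝ} (hs : 0 ≤ s)
    {X : Fin D → ℝ → Matrix (Fin n) (Fin n) ℝ} (hX : d.Sol s X) :
    ∀ ℓ, ∀ t ∈ Set.Icc s d.T, ∀ z : Fin n → ℝ, 0 ≤ z ⬝ᵥ (X ℓ t *ᵥ z) := by
  have hsub : Set.Icc s d.T ⊆ Set.Icc 0 d.T := Set.Icc_subset_Icc_left hs
  have hXc : ∀ l i j, ContinuousOn (fun t => X l t i j) (Set.Icc s d.T) := fun l i j t ht =>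
    (hX.2 l t ht i j).continuousAt.continuousWithinAt
  have hcont : ContinuousOn (curve (d.cl X)) (Set.Icc s d.T) := by
    refine continuousOn_pi.2 fun l => continuousOn_pi.2 fun i => continuousOn_pi.2 fun j => ?_
    have hA := fun i j => (d.hA l i j).mono hsub
    have hB := fun i j => (d.hB l i j).mono hsub
    have hG := fun i j => (d.hG l i j).mono hsub
    have hW := fun i j => (d.hW l i j).mono hsub
    have hX := fun i j => hXc l i j
    simp only [curve, cl, Matrix.mul_apply, Matrix.add_apply, Matrix.sub_apply,
      Matrix.transpose_apply]
    fun_prop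
  obtain ⟨K, hK⟩ := isCompact_Icc.exists_bound_of_continuousOn hcont
  refine ric_pos s d.T d.P d.hPoff d.hPsum (d.cl X)
    (fun ℓ t => (d.H ℓ t - (d.G ℓ t)ᵀ * d.W ℓ t * d.G ℓ t) +
      ((d.B ℓ t)ᵀ * X ℓ t)ᵀ * d.W ℓ t * ((d.B ℓ t)ᵀ * X ℓ t)) X K ?_ ?_ (hX.symm hs) ?_ ?_
  · intro ℓ t ht i j
    have h1 := hK t ht
    have h2 := norm_le_pi_norm (curve (d.cl X) t) ℓ
    have h3 := norm_le_pi_norm (curve (d.cl X) t ℓ) i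
    have h4 := norm_le_pi_norm (curve (d.cl X) t ℓ i) j
    exact ((h4.trans h3).trans h2).trans h1
  · intro ℓ t ht z
    have h1 := d.hHG ℓ t (hsub ht)
    have h2 := (d.hWp ℓ t (hsub ht)).conjTranspose_mul_mul_same ((d.B ℓ t)ᵀ * X ℓ t)
    rw [conjTranspose_eq_transpose_of_trivial] at h2
    exact ((ric_psd_iff _).1 (h1.add h2)).2 z
  · intro ℓ z
    rw [hX.1]
    exact ((ric_psd_iff _).1 (d.hS ℓ)).2 z
  · intro ℓ t ht i j
    refine (hX.2 ℓ t ht i j).congr_deriv ?_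
    congr 2
    simp only [rhs, ricRHS, cl, transpose_add, transpose_sub, transpose_mul, transpose_transpose,
      d.wsymm (hsub ht), (hX.symm hs ℓ t ht).eq, Matrix.mul_sub, Matrix.sub_mul, Matrix.mul_add,
      Matrix.add_mul, Matrix.mul_assoc]
    abel_nf

lemma bound : ∃ M : ℝ, 0 ≤ M ∧ (∀ ℓ i j, |d.S ℓ i j| ≤ M) ∧
    ∀ s, 0 ≤ s → ∀ X : Fin D → ℝ → Matrix (Fin n) (Fin n) ℝ, d.Sol s X →
    ∀ ℓ, ∀ t ∈ Set.Icc s d.T, ∀ i j, |X ℓ t i j| ≤ M := by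
  obtain ⟨K, hK⟩ := isCompact_Icc.exists_bound_of_continuousOn d.coef_cont
  have entry : ∀ {a b : ℕ} (x : RicE D a b), ‖x‖ ≤ K → ∀ l i j, |x l i j| ≤ K := by
    intro a b x hx l i j
    exact (((norm_le_pi_norm (x l i) j).trans (norm_le_pi_norm (x l) i)).trans
      (norm_le_pi_norm x l)).trans hx
  have hA : ∀ ℓ, ∀ t ∈ Set.Icc 0 d.T, ∀ i j, |d.A ℓ t i j| ≤ K := fun ℓ t ht i j =>
    entry (d.coef t).1 ((norm_fst_le _).trans (hK t ht)) ℓ i j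
  have hH : ∀ ℓ, ∀ t ∈ Set.Icc 0 d.T, ∀ i j, |d.H ℓ t i j| ≤ K := fun ℓ t ht i j =>
    entry (d.coef t).2.2.1 (((norm_fst_le _).trans ((norm_snd_le _).trans (norm_snd_le _))).trans
      (hK t ht)) ℓ i j
  have hK0 : 0 ≤ K := (norm_nonneg _).trans (hK 0 ⟨le_rfl, d.hT.le⟩)
  let KS : ℝ := ‖(fun l i j => d.S l i j : RicE D n n)‖
  have hS : ∀ ℓ i j, |d.S ℓ i j| ≤ KS := by
    intro l i j
    let x : RicE D n n := fun l i j => d.S l i j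
    exact (((norm_le_pi_norm (x l i) j).trans (norm_le_pi_norm (x l) i)).trans
      (norm_le_pi_norm x l))
  have hKS : 0 ≤ KS := norm_nonneg _
  set β : ℝ := n * K + n * KS with hβ
  have hβ0 : 0 ≤ β := by positivity
  set c : ℝ := 2 * (n * K) + 1 with hc
  have hc0 : 0 ≤ c := by positivity
  refine ⟨β * Real.exp (c * d.T) + KS, by positivity, fun ℓ i j =>
    (hS ℓ i j).trans (le_add_of_nonneg_left (by positivity)), ?_⟩
  intro s hs X hX
  have hsub : Set.Icc s d.T ⊆ Set.Icc 0 d.T := Set.Icc_subset_Icc_left hs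
  let e : ℝ → ℝ := fun u => β * Real.exp (c * (d.T - u))
  have hed : ∀ u, HasDerivAt e (-(c * e u)) u := by
    intro u
    have h1 : HasDerivAt (fun u => c * (d.T - u)) (c * (0 - 1)) u :=
      (((hasDerivAt_const u d.T).sub (hasDerivAt_id u))).const_mul c
    refine HasDerivAt.congr_deriv (f := fun u => β * Real.exp (c * (d.T - u)))
      (h1.exp.const_mul β) ?_
    simp only [e]; ring
  have hup : ∀ ℓ, ∀ t ∈ Set.Icc s d.T, ∀ z : Fin n → ℝ,
      0 ≤ z ⬝ᵥ ((e t • (1 : Matrix (Fin n) (Fin n) ℝ) - X ℓ t) *ᵥ z) := by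
    refine ric_pos s d.T d.P d.hPoff d.hPsum d.A
      (fun ℓ t => e t • (c • (1 : Matrix (Fin n) (Fin n) ℝ) - (d.A ℓ t)ᵀ - d.A ℓ t) - d.H ℓ t +
        ((d.B ℓ t)ᵀ * X ℓ t + d.G ℓ t)ᵀ * d.W ℓ t * ((d.B ℓ t)ᵀ * X ℓ t + d.G ℓ t))
      (fun ℓ t => e t • (1 : Matrix (Fin n) (Fin n) ℝ) - X ℓ t) K
      (fun ℓ t ht => hA ℓ t (hsub ht)) ?_ ?_ ?_ ?_
    · intro ℓ t ht w
      have h2 := (d.hWp ℓ t (hsub ht)).conjTranspose_mul_mul_same ((d.B ℓ t)ᵀ * X ℓ t + d.G ℓ t)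
      rw [conjTranspose_eq_transpose_of_trivial] at h2
      have h3 := ((ric_psd_iff _).1 h2).2 w
      rw [add_mulVec, dotProduct_add]
      refine add_nonneg ?_ h3
      simp only [smul_mulVec, one_mulVec, dotProduct_smul,
        smul_eq_mul, sub_mulVec, dotProduct_sub]
      have h4 := abs_le.1 (ric_quad_bound (d.A ℓ t) K (hA ℓ t (hsub ht)) w)
      have h5 := abs_le.1 (ric_quad_bound (d.H ℓ t) K (hH ℓ t (hsub ht)) w)
      have h6 : w ⬝ᵥ ((d.A ℓ t)ᵀ *ᵥ w) = w ⬝ᵥ (d.A ℓ t *ᵥ w) := by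
        rw [mulVec_transpose, dotProduct_comm, dotProduct_mulVec]
      rw [h6]
      have hww : 0 ≤ w ⬝ᵥ w := Finset.sum_nonneg fun i _ => mul_self_nonneg _
      have he1 : β ≤ e t := by
        have : 1 ≤ Real.exp (c * (d.T - t)) :=
          Real.one_le_exp (mul_nonneg hc0 (sub_nonneg.2 ht.2))
        exact le_mul_of_one_le_right hβ0 this
      have h7 : w ⬝ᵥ w ≤ c * w ⬝ᵥ w - w ⬝ᵥ (d.A ℓ t *ᵥ w) - w ⬝ᵥ (d.A ℓ t *ᵥ w) := by
        rw [hc]; linarith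
      have h8 := mul_le_mul he1 h7 hww (hβ0.trans he1)
      have h9 : n * K * w ⬝ᵥ w ≤ β * w ⬝ᵥ w :=
        mul_le_mul_of_nonneg_right (le_add_of_nonneg_right (by positivity)) hww
      linarith
    · intro ℓ t ht
      simp only [IsSymm, transpose_sub, transpose_smul, transpose_one, (hX.symm hs ℓ t ht).eq]
    · intro ℓ w
      rw [hX.1]
      have h5 := abs_le.1 (ric_quad_bound (d.S ℓ) KS (hS ℓ) w)
      simp only [smul_mulVec, one_mulVec, dotProduct_smul,
        smul_eq_mul, sub_mulVec, dotProduct_sub, e, sub_self, mul_zero, Real.exp_zero, mul_one]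
      have hww : 0 ≤ w ⬝ᵥ w := Finset.sum_nonneg fun i _ => mul_self_nonneg _
      have h9 : n * KS * w ⬝ᵥ w ≤ β * w ⬝ᵥ w :=
        mul_le_mul_of_nonneg_right (le_add_of_nonneg_left (by positivity)) hww
      linarith
    · intro ℓ u hu i j
      have h1 := ((hed u).mul_const ((1 : Matrix (Fin n) (Fin n) ℝ) i j)).sub (hX.2 ℓ u hu i j)
      have h2 : ∑ j', d.P ℓ j' • (e u • (1 : Matrix (Fin n) (Fin n) ℝ) - X j' u)
          = - ∑ j', d.P ℓ j' • X j' u := by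
        simp only [smul_sub, Finset.sum_sub_distrib, ← Finset.sum_smul, d.hPsum, zero_smul, zero_sub]
      refine HasDerivAt.congr_deriv
        (f := fun u => e u * (1 : Matrix (Fin n) (Fin n) ℝ) i j - X ℓ u i j) h1 ?_
      rw [h2]
      simp only [rhs, ricRHS, Matrix.mul_sub, Matrix.sub_mul, Matrix.mul_smul, Matrix.smul_mul,
        Matrix.mul_one, Matrix.one_mul, Matrix.add_apply, Matrix.sub_apply, Matrix.smul_apply,
        Matrix.neg_apply, smul_eq_mul]
      ring
  intro ℓ t ht i j
  have hle : e t ≤ β * Real.exp (c * d.T) + KS := by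
    refine le_add_of_le_of_nonneg ?_ hKS
    refine mul_le_mul_of_nonneg_left (Real.exp_le_exp.2 ?_) hβ0
    exact mul_le_mul_of_nonneg_left (by linarith [hs.trans ht.1]) hc0
  refine le_trans ?_ hle
  have hsy : X ℓ t j i = X ℓ t i j := (hX.symm hs ℓ t ht).apply i j
  have q : ∀ (a b : ℝ) (M : Matrix (Fin n) (Fin n) ℝ),
      (Pi.single i a + Pi.single j b : Fin n → ℝ) ⬝ᵥ (M *ᵥ (Pi.single i a + Pi.single j b)) =
      a * a * M i i + a * b * M i j + b * a * M j i + b * b * M j j := by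
    intro a b M
    simp [mulVec_add, add_dotProduct, dotProduct_add]
    ring
  have p1 := hX.nonneg hs ℓ t ht (Pi.single i 1 + Pi.single j 1)
  have p2 := hX.nonneg hs ℓ t ht (Pi.single i 1 + Pi.single j (-1))
  have p3 := hup ℓ t ht (Pi.single i 1 + Pi.single i 0)
  have p4 := hup ℓ t ht (Pi.single j 1 + Pi.single j 0)
  rw [q] at p1 p2
  simp at p3 p4
  rw [abs_le]
  constructor <;> linarith

/-- Entrywise truncation. -/
def clip (M : ℝ) (x : RicE D n n) : RicE D n n := fun l i j => max (-M) (min M (x l i j))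

lemma clip_mem {M : ℝ} (hM : 0 ≤ M) (x : RicE D n n) : clip M x ∈ Metric.closedBall 0 M := by
  rw [mem_closedBall_zero_iff]
  refine (pi_norm_le_iff_of_nonneg hM).2 fun l => (pi_norm_le_iff_of_nonneg hM).2 fun i =>
    (pi_norm_le_iff_of_nonneg hM).2 fun j => ?_
  rw [Real.norm_eq_abs, abs_le]
  exact ⟨le_max_left _ _, max_le (by linarith) (min_le_left _ _)⟩

lemma clip_eq {M : ℝ} (x : RicE D n n) (hx : ∀ l i j, |x l i j| ≤ M) : clip M x = x := by
  funext l i j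
  have := abs_le.1 (hx l i j)
  simp only [clip]
  rw [min_eq_right this.2, max_eq_right this.1]

lemma clip_lip (M : ℝ) : LipschitzWith 1 (clip (D := D) (n := n) M) := by
  refine LipschitzWith.of_dist_le_mul fun x y => ?_
  rw [NNReal.coe_one, one_mul]
  refine (dist_pi_le_iff dist_nonneg).2 fun l => (dist_pi_le_iff dist_nonneg).2 fun i =>
    (dist_pi_le_iff dist_nonneg).2 fun j => ?_
  refine le_trans ?_ ((dist_le_pi_dist (x l i) (y l i) j).trans
    ((dist_le_pi_dist (x l) (y l) i).trans (dist_le_pi_dist x y l)))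
  simp only [clip, Real.dist_eq]
  have := ((LipschitzWith.id (α := ℝ)).const_min M).const_max (-M)
  simpa [Real.dist_eq] using this.dist_le_mul (x l i j) (y l i j)

lemma exists_clip (M : ℝ) (hM : 0 ≤ M) : ∃ α : ℝ → RicE D n n,
    α d.T = (fun l i j => d.S l i j) ∧
    ∀ t ∈ Set.Icc 0 d.T, HasDerivAt α (ricF d.P (d.coef t, clip M (α t))) t := by
  have hT := d.hT
  let pr : ℝ → ℝ := fun t => (Set.projIcc 0 d.T hT.le t : ℝ)
  have hpr : ∀ t, pr t ∈ Set.Icc 0 d.T := fun t => (Set.projIcc 0 d.T hT.le t).2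
  have hprc : Continuous pr := continuous_subtype_val.comp continuous_projIcc
  let v : ℝ → RicE D n n → RicE D n n := fun t x => ricF d.P (d.coef (pr t), clip M x)
  obtain ⟨K, hK⟩ := d.lip' M
  have hlip : ∀ t, LipschitzWith K (v t) := by
    intro t x y
    refine (hK (pr t) (hpr t) (clip_mem hM x) (clip_mem hM y)).trans ?_
    gcongr
    simpa using clip_lip M x y
  obtain ⟨L, hL⟩ := ((isCompact_Icc.image_of_continuousOn d.coef_cont).prod
    (isCompact_closedBall (0 : RicE D n n) M)).exists_bound_of_continuousOn
    (ricF_contDiff d.P).continuous.continuousOn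
  have hLv : ∀ t x, ‖v t x‖ ≤ L := fun t x =>
    hL (d.coef (pr t), clip M x) ⟨⟨pr t, hpr t, rfl⟩, clip_mem hM x⟩
  have hL0 : 0 ≤ L := (norm_nonneg _).trans (hLv 0 0)
  have hpl : IsPicardLindelof v (tmin := -1) (tmax := d.T + 1)
      ⟨d.T, by constructor <;> linarith⟩ (fun l i j => d.S l i j : RicE D n n)
      (⟨L, hL0⟩ * ⟨d.T + 1, by linarith⟩) 0 ⟨L, hL0⟩ K := by
    refine ⟨fun t _ => (hlip t).lipschitzOnWith, fun x _ => ?_, fun t _ x _ => hLv t x, ?_⟩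
    · refine ((ricF_contDiff d.P).continuous.comp ?_).continuousOn
      exact (d.coef_cont.comp_continuous hprc hpr).prodMk continuous_const
    · simp only [NNReal.coe_zero, sub_zero]
      exact mul_le_mul_of_nonneg_left (max_le (by linarith) (by linarith)) hL0
  obtain ⟨α, h0, hα⟩ := hpl.exists_eq_forall_mem_Icc_hasDerivWithinAt₀
  refine ⟨α, h0, fun t ht => ?_⟩
  have h1 := (hα t ⟨by linarith [ht.1], by linarith [ht.2]⟩).hasDerivAt
    (Icc_mem_nhds (by linarith [ht.1]) (by linarith [ht.2]))
  have h2 : pr t = t := by simp only [pr, Set.projIcc_of_mem hT.le ht]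
  simpa only [v, h2] using h1

lemma exists_sol : ∃ X, d.Sol 0 X := by
  obtain ⟨M, hM, hSM, hbd⟩ := d.bound
  obtain ⟨α, hαT, hα⟩ := d.exists_clip (M + 1) (by linarith)
  let X : Fin D → ℝ → Matrix (Fin n) (Fin n) ℝ := fun l t => Matrix.of (α t l)
  have hXT : ∀ ℓ, X ℓ d.T = d.S ℓ := by
    intro ℓ
    ext i j
    simp [X, hαT]
  have hsol : ∀ s, 0 ≤ s → (∀ t ∈ Set.Icc s d.T, ‖α t‖ ≤ M + 1) → d.Sol s X := by
    intro s hs hb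
    refine ⟨hXT, fun ℓ t ht i j => ?_⟩
    have h1 := hα t ⟨hs.trans ht.1, ht.2⟩
    rw [clip_eq _ (fun l i j => (((norm_le_pi_norm (α t l i) j).trans
      (norm_le_pi_norm (α t l) i)).trans (norm_le_pi_norm (α t) l)).trans (hb t ht))] at h1
    exact hasDerivAt_pi.1 (hasDerivAt_pi.1 (hasDerivAt_pi.1 h1 ℓ) i) j
  have hnorm : ∀ s, 0 ≤ s → d.Sol s X → ∀ t ∈ Set.Icc s d.T, ‖α t‖ ≤ M := by
    intro s hs h t ht
    refine (pi_norm_le_iff_of_nonneg hM).2 fun l => (pi_norm_le_iff_of_nonneg hM).2 fun i =>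
      (pi_norm_le_iff_of_nonneg hM).2 fun j => ?_
    exact hbd s hs X h l t ht i j
  have hcont : ContinuousOn α (Set.Icc 0 d.T) := fun t ht =>
    (hα t ht).continuousAt.continuousWithinAt
  by_contra! hno
  let Bad : Set ℝ := {t | t ∈ Set.Icc 0 d.T ∧ ‖α t‖ ∈ Set.Ici (M + 1)}
  have hBc : IsCompact Bad := isCompact_Icc.of_isClosed_subset
    (hcont.norm.preimage_isClosed_of_isClosed isClosed_Icc isClosed_Ici) (fun t ht => ht.1)
  have hne : Bad.Nonempty := by
    by_contra! h
    refine hno X (hsol 0 le_rfl fun t ht => ?_)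
    by_contra! h'
    have : t ∈ Bad := ⟨ht, h'.le⟩
    simp [h] at this
  obtain ⟨t₀, ⟨ht₀, hge⟩, hmax⟩ := hBc.exists_isGreatest hne
  have hafter : ∀ t ∈ Set.Ioc t₀ d.T, ‖α t‖ ≤ M + 1 := by
    intro t ht
    by_contra! h
    exact absurd (hmax ⟨⟨ht₀.1.trans ht.1.le, ht.2⟩, h.le⟩) (not_le.2 ht.1)
  have hle : ‖α t₀‖ ≤ M + 1 := by
    rcases eq_or_lt_of_le ht₀.2 with h | h
    · have hM1 : (0 : ℝ) ≤ M + 1 := by linarith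
      rw [h, hαT]
      refine (pi_norm_le_iff_of_nonneg hM1).2 fun l => (pi_norm_le_iff_of_nonneg hM1).2 fun i =>
        (pi_norm_le_iff_of_nonneg hM1).2 fun j => ?_
      exact (hSM l i j).trans (by linarith)
    · have hc := (hα t₀ ht₀).continuousAt.norm.tendsto.mono_left
        (nhdsWithin_le_nhds (s := Set.Ioi t₀))
      have hev : ∀ᶠ t in nhdsWithin t₀ (Set.Ioi t₀), t ∈ Set.Ioc t₀ d.T := Ioc_mem_nhdsGT h
      exact le_of_tendsto hc (hev.mono hafter)
  have := hnorm t₀ ht₀.1 (hsol t₀ ht₀.1 fun t ht => by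
    rcases eq_or_lt_of_le ht.1 with h | h
    · rw [← h]; exact hle
    · exact hafter t ⟨h, ht.2⟩) t₀ ⟨le_rfl, ht₀.2⟩
  have hge' : M + 1 ≤ ‖α t₀‖ := hge
  linarith

end RicData

lemma ric_inv_cont {m : ℕ} {s : Set ℝ} (R : ℝ → Matrix (Fin m) (Fin m) ℝ)
    (hR : ∀ i j, ContinuousOn (fun t => R t i j) s) (hu : ∀ t ∈ s, IsUnit (R t).det) :
    ∀ i j, ContinuousOn (fun t => (R t)⁻¹ i j) s := by
  intro i j
  have hc : Continuous (fun t : s => R t) :=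
    continuous_matrix fun i j => continuousOn_iff_continuous_domRestrict.1 (hR i j)
  rw [continuousOn_iff_continuous_domRestrict]
  have h1 : Continuous fun t : s => ((R t).det)⁻¹ * (R t).adjugate i j :=
    (hc.matrix_det.inv₀ fun t => (hu t t.2).ne_zero).mul (hc.matrix_adjugate.matrix_elem i j)
  refine h1.congr fun t => ?_
  simp [Matrix.inv_def]



theorem stmt11 (D n m : ℕ) (hD : 0 < D) (hn : 0 < n) (hm : 0 < m)
    (T : ℝ) (hT : 0 < T) (δ : ℝ) (hδ : 0 < δ)
    (P : Fin D → Fin D → ℝ)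
    (hPoff : ∀ ℓ j, ℓ ≠ j → 0 ≤ P ℓ j)
    (hPdiag : ∀ ℓ, P ℓ ℓ = -∑ j ∈ Finset.univ.erase ℓ, P ℓ j)
    (A : Fin D → ℝ → Matrix (Fin n) (Fin n) ℝ)
    (B : Fin D → ℝ → Matrix (Fin n) (Fin m) ℝ)
    (H : Fin D → ℝ → Matrix (Fin n) (Fin n) ℝ)
    (G : Fin D → ℝ → Matrix (Fin m) (Fin n) ℝ)
    (R : Fin D → ℝ → Matrix (Fin m) (Fin m) ℝ)
    (hAcont : ∀ ℓ i j, ContinuousOn (fun t => A ℓ t i j) (Set.Icc (0 : ℝ) T))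
    (hBcont : ∀ ℓ i j, ContinuousOn (fun t => B ℓ t i j) (Set.Icc (0 : ℝ) T))
    (hHcont : ∀ ℓ i j, ContinuousOn (fun t => H ℓ t i j) (Set.Icc (0 : ℝ) T))
    (hGcont : ∀ ℓ i j, ContinuousOn (fun t => G ℓ t i j) (Set.Icc (0 : ℝ) T))
    (hRcont : ∀ ℓ i j, ContinuousOn (fun t => R ℓ t i j) (Set.Icc (0 : ℝ) T))
    (hAbd : ∃ K, ∀ ℓ, ∀ t ∈ Set.Icc (0 : ℝ) T, ∀ i j, |A ℓ t i j| ≤ K)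
    (hBbd : ∃ K, ∀ ℓ, ∀ t ∈ Set.Icc (0 : ℝ) T, ∀ i j, |B ℓ t i j| ≤ K)
    (hHbd : ∃ K, ∀ ℓ, ∀ t ∈ Set.Icc (0 : ℝ) T, ∀ i j, |H ℓ t i j| ≤ K)
    (hGbd : ∃ K, ∀ ℓ, ∀ t ∈ Set.Icc (0 : ℝ) T, ∀ i j, |G ℓ t i j| ≤ K)
    (hRbd : ∃ K, ∀ ℓ, ∀ t ∈ Set.Icc (0 : ℝ) T, ∀ i j, |R ℓ t i j| ≤ K)
    (hHsymm : ∀ ℓ, ∀ t ∈ Set.Icc (0 : ℝ) T, (H ℓ t).IsSymm)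
    (hRsymm : ∀ ℓ, ∀ t ∈ Set.Icc (0 : ℝ) T, (R ℓ t).IsSymm)
    (hRpos : ∀ ℓ, ∀ t ∈ Set.Icc (0 : ℝ) T,
      (R ℓ t - δ • (1 : Matrix (Fin m) (Fin m) ℝ)).PosSemidef)
    (hHG : ∀ ℓ, ∀ t ∈ Set.Icc (0 : ℝ) T,
      (H ℓ t - (G ℓ t)ᵀ * (R ℓ t)⁻¹ * G ℓ t).PosSemidef)
    (S : Fin D → Matrix (Fin n) (Fin n) ℝ)
    (hS : ∀ ℓ, (S ℓ).PosSemidef) :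
    ∃ Λ : Fin D → ℝ → Matrix (Fin n) (Fin n) ℝ,
      CoupledRiccatiSol D n m T P A B H G R S Λ ∧
        (∀ Λ' : Fin D → ℝ → Matrix (Fin n) (Fin n) ℝ,
          CoupledRiccatiSol D n m T P A B H G R S Λ' →
            ∀ ℓ, ∀ t ∈ Set.Icc (0 : ℝ) T, Λ' ℓ t = Λ ℓ t) ∧
        ∀ ℓ, ∀ t ∈ Set.Icc (0 : ℝ) T, (Λ ℓ t).PosSemidef := by
  have hpd : ∀ ℓ, ∀ t ∈ Set.Icc (0 : ℝ) T, (R ℓ t).PosDef := by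
    intro ℓ t ht
    have h1 : (δ • (1 : Matrix (Fin m) (Fin m) ℝ)).PosDef := Matrix.PosDef.one.smul hδ
    have h2 := h1.add_posSemidef (hRpos ℓ t ht)
    rwa [add_sub_cancel] at h2
  let d : RicData D n m :=
    { T := T, P := P, A := A, B := B, H := H, G := G, W := fun ℓ t => (R ℓ t)⁻¹, S := S
      hT := hT
      hPoff := hPoff
      hPsum := fun ℓ => by
        rw [← Finset.add_sum_erase _ _ (Finset.mem_univ ℓ), hPdiag ℓ]
        simp
      hA := hAcont
      hB := hBcont
      hH := hHcont
      hG := hGcont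
      hW := fun ℓ i j => ric_inv_cont (R ℓ) (hRcont ℓ)
        (fun t ht => (Matrix.isUnit_iff_isUnit_det _).1 (hpd ℓ t ht).isUnit) i j
      hHs := hHsymm
      hWp := fun ℓ t ht => (hpd ℓ t ht).posSemidef.inv
      hHG := hHG
      hS := hS }
  obtain ⟨X, hX⟩ := d.exists_sol
  refine ⟨X, hX, fun Y hY => d.uniq le_rfl (X := Y) (Y := X) hY hX, fun ℓ t ht => ?_⟩
  exact (ric_psd_iff _).2 ⟨hX.symm le_rfl ℓ t ht, hX.nonneg le_rfl ℓ t ht⟩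
end
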